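/- For each fixed integer p ≥ 0, the Taylor coefficients z_{p,q} of Z satisfy z_{p,q} ~ (a_p/Γ(−4/3)) · u_c^{−q} · q^{−7/3} as q → ∞, where Γ denotes the Gamma function. -/

import Mathlib

noncomputable def nuc : ℝ := 1 + 2 * Real.sqrt 7

noncomputable def tc : ℝ := Real.sqrt 10 / (8 * (7 + Real.sqrt 7) ^ ((3:ℝ)/2))

noncomputable def uc : ℝ := (6/5) * (7 + Real.sqrt 7) * tc

/-- The rational parametrization `û` of the `u`-variable. -/
noncomputable def uhat (H : ℂ) : ℂ :=
  ((uc : ℂ) / 3) * H * (10 - 12 * H + 6 * H ^ 2 - H ^ 3)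

/-- The rational parametrization `Ẑ₀`. -/
noncomputable def Z0hat (H : ℂ) : ℂ :=
  (1/10) * (1 - (1 - (Real.sqrt 7 : ℂ)) * H + 3 * H ^ 2 - H ^ 3)
    * (10 - 12 * H + 6 * H ^ 2 - H ^ 3)

/-- The rational parametrization `Ẑ₁`. -/
noncomputable def Z1hat (H : ℂ) : ℂ :=
  (3 / (10 * (uc : ℂ))) *
    ((Real.sqrt 7 : ℂ) - 1 + H - 3 * (4 - 3 * H + H ^ 2) / (10 - 12 * H + 6 * H ^ 2 - H ^ 3))

/-- The rational parametrization `Â`. -/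
noncomputable def Ahat (H : ℂ) : ℂ :=
  (1/10) * ((((3:ℝ)/2) ^ ((7:ℝ)/3) : ℝ) : ℂ) * (9 - 8 * H + 3 * H ^ 2) / (3 - 3 * H + H ^ 2) ^ 2

open Filter Topology Asymptotics

/-- `f` is the Taylor series at `0` of `F ∘ û⁻¹`. -/
def HasUhatSeries (f : PowerSeries ℂ) (F : ℂ → ℂ) : Prop :=
  ∀ᶠ H in 𝓝 (0 : ℂ), HasSum (fun n : ℕ => PowerSeries.coeff n f * uhat H ^ n) (F H)

/-- The cubic factor of `û`. -/
def cubicFactor (H : ℂ) : ℂ := 10 - 12 * H + 6 * H ^ 2 - H ^ 3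

theorem uhat_eq (H : ℂ) : uhat H = (uc : ℂ) / 3 * H * cubicFactor H := rfl

theorem tc_pos : 0 < tc := by unfold tc; positivity

theorem uc_pos : 0 < uc := by
  have := tc_pos
  unfold uc; positivity

theorem uc_ne_zero : (uc : ℂ) ≠ 0 := by exact_mod_cast uc_pos.ne'

theorem uhat_zero : uhat 0 = 0 := by simp [uhat]

theorem differentiable_uhat : Differentiable ℂ uhat := by unfold uhat; fun_prop

theorem tendsto_uhat_zero : Tendsto uhat (𝓝 0) (𝓝 0) := by
  simpa [uhat_zero] using differentiable_uhat.continuous.tendsto 0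

theorem continuous_cubicFactor : Continuous cubicFactor := by unfold cubicFactor; fun_prop

theorem eventually_cubicFactor_ne_zero : ∀ᶠ H in 𝓝 (0 : ℂ), cubicFactor H ≠ 0 :=
  continuous_cubicFactor.continuousAt.eventually_ne (by simp [cubicFactor])

theorem eventually_uhat_ne_zero : ∀ᶠ H in 𝓝[≠] (0 : ℂ), uhat H ≠ 0 := by
  filter_upwards [eventually_cubicFactor_ne_zero.filter_mono nhdsWithin_le_nhds,
    self_mem_nhdsWithin] with H h1 h2
  rw [uhat_eq]
  exact mul_ne_zero (mul_ne_zero (div_ne_zero uc_ne_zero (by norm_num)) h2) h1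

namespace HasUhatSeries

variable {f g : PowerSeries ℂ} {F G : ℂ → ℂ}

theorem add (hf : HasUhatSeries f F) (hg : HasUhatSeries g G) :
    HasUhatSeries (f + g) (fun H => F H + G H) := by
  filter_upwards [hf, hg] with H h1 h2
  simpa [add_mul] using h1.add h2

theorem sub (hf : HasUhatSeries f F) (hg : HasUhatSeries g G) :
    HasUhatSeries (f - g) (fun H => F H - G H) := by
  filter_upwards [hf, hg] with H h1 h2
  simpa [sub_mul] using h1.sub h2

theorem mul (hf : HasUhatSeries f F) (hg : HasUhatSeries g G) :
    HasUhatSeries (f * g) (fun H => F H * G H) := by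
  filter_upwards [hf, hg] with H h1 h2
  have key := (summable_norm_sum_mul_antidiagonal_of_summable_norm h1.summable.norm
    h2.summable.norm).of_norm.hasSum
  rw [← tsum_mul_tsum_eq_tsum_sum_antidiagonal_of_summable_norm h1.summable.norm
    h2.summable.norm, h1.tsum_eq, h2.tsum_eq] at key
  suffices h : (fun n : ℕ => PowerSeries.coeff n (f * g) * uhat H ^ n) = _ by rwa [h]
  funext n
  rw [PowerSeries.coeff_mul, Finset.sum_mul]
  refine Finset.sum_congr rfl fun kl hkl => ?_
  rw [← Finset.HasAntidiagonal.mem_antidiagonal.mp hkl, pow_add]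
  ring

theorem const (c : ℂ) : HasUhatSeries (PowerSeries.C c) (fun _ => c) := by
  refine Eventually.of_forall fun H => ?_
  convert hasSum_single (f := fun n : ℕ => PowerSeries.coeff n (PowerSeries.C c) * uhat H ^ n) 0
    fun n hn => ?_
  · simp
  · simp [PowerSeries.coeff_C, hn]

theorem X : HasUhatSeries PowerSeries.X uhat := by
  refine Eventually.of_forall fun H => ?_
  convert hasSum_single
    (f := fun n : ℕ => PowerSeries.coeff n (PowerSeries.X : PowerSeries ℂ) * uhat H ^ n) 1
    fun n hn => ?_
  · simp
  · simp [PowerSeries.coeff_X, hn]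

theorem pow (hf : HasUhatSeries f F) (n : ℕ) : HasUhatSeries (f ^ n) (fun H => F H ^ n) := by
  induction n with
  | zero => simpa using const 1
  | succ n ih => simpa [pow_succ] using ih.mul hf

theorem congr (hf : HasUhatSeries f F) (h : F =ᶠ[𝓝 0] G) : HasUhatSeries f G := by
  filter_upwards [hf, h] with H h1 h2
  rwa [← h2]

theorem hasFPowerSeriesAt (hf : HasUhatSeries f F) :
    ∃ S : ℂ → ℂ, HasFPowerSeriesAt S
      (FormalMultilinearSeries.ofScalars ℂ fun n => PowerSeries.coeff n f) 0 ∧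
      ∀ᶠ H in 𝓝 (0 : ℂ), F H = S (uhat H) := by
  obtain ⟨H₀, hH₀, hne⟩ := ((hf.filter_mono nhdsWithin_le_nhds).and
    eventually_uhat_ne_zero).exists
  set p := FormalMultilinearSeries.ofScalars ℂ fun n => PowerSeries.coeff n f with hp
  have hrad : (0 : ENNReal) < p.radius := by
    refine lt_of_lt_of_le (b := (‖uhat H₀‖₊ : ENNReal)) (by simpa using hne) ?_
    refine p.le_radius_of_tendsto (l := 0) ?_
    have := hH₀.summable.norm.tendsto_atTop_zero
    refine squeeze_zero (fun n => by positivity) (fun n => ?_) this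
    rw [hp, FormalMultilinearSeries.ofScalars_norm, norm_mul, norm_pow, coe_nnnorm]
  refine ⟨p.sum, (p.hasFPowerSeriesOnBall hrad).hasFPowerSeriesAt, ?_⟩
  filter_upwards [hf] with H h
  rw [FormalMultilinearSeries.sum, ← h.tsum_eq]
  simp [hp, mul_comm]

theorem eq_zero (hf : HasUhatSeries f F) (h : F =ᶠ[𝓝 0] 0) : f = 0 := by
  obtain ⟨S, hS, hSF⟩ := hf.hasFPowerSeriesAt
  have hfreq : ∃ᶠ w in 𝓝[≠] (0 : ℂ), S w = 0 := by
    have ht : Tendsto uhat (𝓝[≠] 0) (𝓝[≠] 0) :=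
      tendsto_nhdsWithin_iff.2 ⟨tendsto_uhat_zero.mono_left nhdsWithin_le_nhds,
        eventually_uhat_ne_zero⟩
    refine ht.frequently (Eventually.frequently ?_)
    filter_upwards [h.filter_mono nhdsWithin_le_nhds, hSF.filter_mono nhdsWithin_le_nhds]
      with H h1 h2
    rw [← h2, h1, Pi.zero_apply]
  have hz := hS.analyticAt.frequently_zero_iff_eventually_zero.1 hfreq
  have hp := hS.locally_zero_iff.1 hz
  ext n
  have := congrArg (fun p => p.coeff n) hp
  rw [FormalMultilinearSeries.coeff_ofScalars] at this
  simpa [FormalMultilinearSeries.coeff] using this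

theorem unique (hf : HasUhatSeries f F) (hg : HasUhatSeries g F) : f = g :=
  sub_eq_zero.1 ((hf.sub hg).eq_zero (Eventually.of_forall fun _ => sub_self _))

/-- The Taylor remainder of `F` in powers of `û`. -/
theorem sub_sum_isBigO (hf : HasUhatSeries f F) (n : ℕ) :
    (fun H => F H - ∑ m ∈ Finset.range n, PowerSeries.coeff m f * uhat H ^ m)
      =O[𝓝 0] fun H => uhat H ^ n := by
  obtain ⟨S, hS, hSF⟩ := hf.hasFPowerSeriesAt
  have h := (hS.isBigO_sub_partialSum_pow n).comp_tendsto tendsto_uhat_zero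
  refine IsBigO.congr' (g₁ := fun H => ‖uhat H‖ ^ n) h ?_ EventuallyEq.rfl |>.trans
    (IsBigO.of_norm_right (by simpa [norm_pow] using isBigO_refl _ _))
  filter_upwards [hSF] with H h
  simp [h, FormalMultilinearSeries.partialSum, mul_comm]

end HasUhatSeries

/-- A holomorphic function that is `O((z - c) ^ n)` at `c` is globally divisible by `(z - c) ^ n`. -/
theorem exists_eq_pow_mul_of_isBigO {U : Set ℂ} {c : ℂ} (hU : U ∈ 𝓝 c) (n : ℕ) {f : ℂ → ℂ}
    (hf : DifferentiableOn ℂ f U) (h : f =O[𝓝[≠] c] fun z => (z - c) ^ n) :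
    ∃ q : ℂ → ℂ, DifferentiableOn ℂ q U ∧ ∀ z, f z = (z - c) ^ n * q z := by
  induction n generalizing f with
  | zero => exact ⟨f, hf, by simp⟩
  | succ n ih =>
    have hc : f c = 0 := by
      have h1 : Tendsto f (𝓝[≠] c) (𝓝 (f c)) :=
        (hf.differentiableAt hU).continuousAt.tendsto.mono_left nhdsWithin_le_nhds
      refine tendsto_nhds_unique h1 (h.trans_tendsto ?_)
      have : Tendsto (fun z => (z - c) ^ (n + 1)) (𝓝 c) (𝓝 ((c - c) ^ (n + 1))) :=
        Continuous.tendsto (by fun_prop) c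
      simpa using this.mono_left nhdsWithin_le_nhds
    have hfac : ∀ z, f z = (z - c) * dslope f c z := fun z => by
      simpa [hc, smul_eq_mul] using (sub_smul_dslope f c z).symm
    obtain ⟨q, hq, hqe⟩ := ih ((Complex.differentiableOn_dslope hU).2 hf) (by
      obtain ⟨C, hC⟩ := h.bound
      refine IsBigO.of_bound C ?_
      filter_upwards [hC, self_mem_nhdsWithin] with z hz hzc
      have hpos : 0 < ‖z - c‖ := norm_pos_iff.2 (sub_ne_zero.2 hzc)
      rw [hfac z, pow_succ, norm_mul, norm_mul, mul_comm, ← mul_assoc] at hz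
      exact le_of_mul_le_mul_right hz hpos)
    exact ⟨q, hq, fun z => by rw [hfac z, hqe z]; ring⟩

/-- An open set containing the closed unit disc on which `û` vanishes only at `0` and
`3 - H` stays in the right half-plane. -/
def uhatDomain : Set ℂ := {H | cubicFactor H ≠ 0 ∧ H.re < 3}

theorem complex_norm_sq_eq (w : ℂ) : ‖w‖ ^ 2 = w.re ^ 2 + w.im ^ 2 := by
  rw [Complex.sq_norm, Complex.normSq_apply]; ring

theorem isOpen_uhatDomain : IsOpen uhatDomain :=
  (isOpen_ne.preimage continuous_cubicFactor).inter
    (isOpen_Iio.preimage Complex.continuous_re)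

theorem closedBall_subset_uhatDomain : Metric.closedBall (0 : ℂ) 1 ⊆ uhatDomain := by
  intro H hH
  have h1 : ‖H‖ ≤ 1 := by simpa using hH
  have h2 : H.re ^ 2 + H.im ^ 2 ≤ 1 := by
    rw [← complex_norm_sq_eq]
    nlinarith [norm_nonneg H]
  have hre : H.re ≤ 1 := by nlinarith [sq_nonneg H.im]
  refine ⟨fun h0 => ?_, by linarith⟩
  have h3 := congrArg Complex.re h0
  have h4 : (cubicFactor H).re
      = 2 + (2 - H.re) * ((2 - H.re) ^ 2 - 3 * H.im ^ 2) := by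
    simp [cubicFactor, pow_succ]
    ring
  rw [h4, Complex.zero_re] at h3
  nlinarith [mul_nonneg (by linarith : (0 : ℝ) ≤ 2 - H.re) (sq_nonneg (1 - 2 * H.re)),
    mul_nonneg (by linarith : (0 : ℝ) ≤ 2 - H.re)
      (by linarith : (0 : ℝ) ≤ 1 - (H.re ^ 2 + H.im ^ 2))]

theorem uhatDomain_mem_nhds_zero : uhatDomain ∈ 𝓝 (0 : ℂ) :=
  isOpen_uhatDomain.mem_nhds (closedBall_subset_uhatDomain (by simp))

theorem uhatDomain_mem_nhds_one : uhatDomain ∈ 𝓝 (1 : ℂ) :=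
  isOpen_uhatDomain.mem_nhds (closedBall_subset_uhatDomain (by simp))

theorem uhat_ne_zero {H : ℂ} (hH : H ∈ uhatDomain) (h0 : H ≠ 0) : uhat H ≠ 0 := by
  rw [uhat_eq]
  exact mul_ne_zero (mul_ne_zero (div_ne_zero uc_ne_zero (by norm_num)) h0) hH.1

theorem differentiable_cubicFactor : Differentiable ℂ cubicFactor := by
  unfold cubicFactor; fun_prop

theorem hasDerivAt_uhat (H : ℂ) :
    HasDerivAt uhat ((uc : ℂ) / 3 * ((1 - H) ^ 2 * (10 - 4 * H))) H := by
  have h1 := (((hasDerivAt_id H).const_mul (10 : ℂ)).sub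
    (((hasDerivAt_id H).pow 2).const_mul 12)).add (((hasDerivAt_id H).pow 3).const_mul 6)
  have h2 := (h1.sub ((hasDerivAt_id H).pow 4)).const_mul ((uc : ℂ) / 3)
  have h3 : uhat = fun H => (uc : ℂ) / 3 * (10 * H - 12 * H ^ 2 + 6 * H ^ 3 - H ^ 4) := by
    funext H; simp only [uhat]; ring
  rw [h3]
  convert! h2 using 1
  norm_num
  left
  ring

theorem deriv_uhat (H : ℂ) : deriv uhat H = (uc : ℂ) / 3 * ((1 - H) ^ 2 * (10 - 4 * H)) :=
  (hasDerivAt_uhat H).deriv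

theorem continuous_deriv_uhat : Continuous (deriv uhat) := by
  rw [funext deriv_uhat]; fun_prop

theorem differentiable_deriv_uhat : Differentiable ℂ (deriv uhat) := by
  rw [funext deriv_uhat]; fun_prop

theorem ne_zero_of_mem_complex_unit_sphere {H : ℂ} (hH : H ∈ Metric.sphere (0 : ℂ) 1) : H ≠ 0 := by
  rintro rfl
  simp at hH

theorem mem_uhatDomain_of_mem_sphere {H : ℂ} (hH : H ∈ Metric.sphere (0 : ℂ) 1) :
    H ∈ uhatDomain :=
  closedBall_subset_uhatDomain (Metric.sphere_subset_closedBall hH)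

theorem circleIntegral_uhat_pow_of_lt {m n : ℕ} (h : m < n) :
    ∮ H in C(0, 1), uhat H ^ m * deriv uhat H / uhat H ^ (n + 1) = 0 := by
  obtain ⟨k, rfl⟩ := Nat.exists_eq_add_of_lt h
  refine circleIntegral.integral_eq_zero_of_hasDerivWithinAt
    (f := fun H => -((k : ℂ) + 1)⁻¹ * (uhat H ^ (k + 1))⁻¹) zero_le_one fun H hH => ?_
  have hne := uhat_ne_zero (mem_uhatDomain_of_mem_sphere hH) (ne_zero_of_mem_complex_unit_sphere hH)
  have hd := ((((hasDerivAt_uhat H).pow (k + 1)).inv (pow_ne_zero _ hne)).const_mul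
    (-((k : ℂ) + 1)⁻¹)).hasDerivWithinAt (s := Metric.sphere 0 1)
  convert! hd using 1
  have hk : (k : ℂ) + 1 ≠ 0 := by exact_mod_cast Nat.succ_ne_zero k
  rw [deriv_uhat]
  simp only [Nat.cast_add, Nat.cast_one, Nat.add_sub_cancel]
  field_simp
  simp
  ring

theorem circleIntegral_eq_zero_of_differentiableOn_uhatDomain {q : ℂ → ℂ}
    (hq : DifferentiableOn ℂ q uhatDomain) : ∮ H in C(0, 1), q H = 0 :=
  Complex.circleIntegral_eq_zero_of_differentiable_on_off_countable zero_le_one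
    Set.countable_empty (hq.continuousOn.mono closedBall_subset_uhatDomain) fun _ hz =>
      hq.differentiableAt (isOpen_uhatDomain.mem_nhds
        (closedBall_subset_uhatDomain (Metric.ball_subset_closedBall hz.1)))

theorem circleIntegral_uhat_pow_self (n : ℕ) :
    ∮ H in C(0, 1), uhat H ^ n * deriv uhat H / uhat H ^ (n + 1) = 2 * Real.pi * Complex.I := by
  set φ : ℂ → ℂ := fun H => deriv uhat H / ((uc : ℂ) / 3 * cubicFactor H) with hφ
  have hd : DifferentiableOn ℂ φ uhatDomain :=
    differentiable_deriv_uhat.differentiableOn.div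
      (differentiable_cubicFactor.const_mul _).differentiableOn
      fun H hH => mul_ne_zero (div_ne_zero uc_ne_zero (by norm_num)) hH.1
  have h := Complex.circleIntegral_sub_center_inv_smul_of_differentiable_on_off_countable
    zero_lt_one (c := 0) Set.countable_empty (hd.continuousOn.mono closedBall_subset_uhatDomain)
    fun _ hz => hd.differentiableAt (isOpen_uhatDomain.mem_nhds
      (closedBall_subset_uhatDomain (Metric.ball_subset_closedBall hz.1)))
  have hφ0 : φ 0 = 1 := by
    have := uc_ne_zero
    simp only [hφ, deriv_uhat, cubicFactor]
    field_simp
    norm_num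
  rw [hφ0, smul_eq_mul, mul_one] at h
  rw [← h]
  refine circleIntegral.integral_congr zero_le_one fun H hH => ?_
  have h0 := ne_zero_of_mem_complex_unit_sphere hH
  have hD := (mem_uhatDomain_of_mem_sphere hH).1
  have := uc_ne_zero
  have hne := uhat_ne_zero (mem_uhatDomain_of_mem_sphere hH) h0
  simp only [hφ, sub_zero, smul_eq_mul]
  rw [pow_succ, mul_div_mul_left _ _ (pow_ne_zero _ hne), uhat_eq]
  field_simp

/-- Lagrange inversion on the unit circle. -/
theorem HasUhatSeries.coeff_eq_circleIntegral {f : PowerSeries ℂ} {Φ : ℂ → ℂ}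
    (hf : HasUhatSeries f Φ) (hΦ : DifferentiableOn ℂ Φ uhatDomain) (n : ℕ) :
    ∮ H in C(0, 1), Φ H * deriv uhat H / uhat H ^ (n + 1)
      = 2 * Real.pi * Complex.I * PowerSeries.coeff n f := by
  have hbig : (fun H => Φ H - ∑ m ∈ Finset.range (n + 1), PowerSeries.coeff m f * uhat H ^ m)
      =O[𝓝[≠] 0] fun H => (H - 0) ^ (n + 1) := by
    refine ((hf.sub_sum_isBigO (n + 1)).mono nhdsWithin_le_nhds).trans (IsBigO.pow ?_ _)
    refine IsBigO.mono ?_ nhdsWithin_le_nhds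
    simpa [uhat_zero] using (hasDerivAt_uhat 0).isBigO_sub
  obtain ⟨q, hq, hqe⟩ := exists_eq_pow_mul_of_isBigO uhatDomain_mem_nhds_zero (n + 1)
    (hΦ.sub (Differentiable.differentiableOn
      (Differentiable.fun_sum fun m _ => (differentiable_uhat.pow m).const_mul _))) hbig
  set ψ : ℂ → ℂ := fun H => q H * deriv uhat H / ((uc : ℂ) / 3 * cubicFactor H) ^ (n + 1) with hψ
  have hψd : DifferentiableOn ℂ ψ uhatDomain :=
    (hq.mul differentiable_deriv_uhat.differentiableOn).div
      ((differentiable_cubicFactor.const_mul _).pow _).differentiableOn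
      fun H hH => pow_ne_zero _ (mul_ne_zero (div_ne_zero uc_ne_zero (by norm_num)) hH.1)
  have hmint : ∀ m, CircleIntegrable
      (fun H => PowerSeries.coeff m f * (uhat H ^ m * deriv uhat H / uhat H ^ (n + 1))) 0 1 := by
    intro m
    refine ContinuousOn.circleIntegrable zero_le_one (continuousOn_const.mul
      (ContinuousOn.div ?_ ?_ fun H hH => pow_ne_zero _ (uhat_ne_zero
        (mem_uhatDomain_of_mem_sphere hH) (ne_zero_of_mem_complex_unit_sphere hH))))
    · exact ((differentiable_uhat.continuous.pow _).mul continuous_deriv_uhat).continuousOn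
    · exact (differentiable_uhat.continuous.pow _).continuousOn
  have hψint : CircleIntegrable ψ 0 1 := ContinuousOn.circleIntegrable zero_le_one
    (hψd.continuousOn.mono fun H hH => mem_uhatDomain_of_mem_sphere hH)
  have hsplit : ∮ H in C(0, 1), Φ H * deriv uhat H / uhat H ^ (n + 1)
      = ∮ H in C(0, 1), ((∑ m ∈ Finset.range (n + 1),
        PowerSeries.coeff m f * (uhat H ^ m * deriv uhat H / uhat H ^ (n + 1))) + ψ H) := by
    refine circleIntegral.integral_congr zero_le_one fun H hH => ?_
    have h0 := ne_zero_of_mem_complex_unit_sphere hH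
    have hD := (mem_uhatDomain_of_mem_sphere hH).1
    have hc := uc_ne_zero
    have hψH : ψ H = (H - 0) ^ (n + 1) * q H * deriv uhat H / uhat H ^ (n + 1) := by
      simp only [hψ, uhat_eq, mul_pow, sub_zero]
      field_simp
    have hsum : ∑ m ∈ Finset.range (n + 1),
        PowerSeries.coeff m f * (uhat H ^ m * deriv uhat H / uhat H ^ (n + 1))
        = (∑ m ∈ Finset.range (n + 1), PowerSeries.coeff m f * uhat H ^ m) * deriv uhat H
          / uhat H ^ (n + 1) := by
      rw [Finset.sum_mul, Finset.sum_div]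
      exact Finset.sum_congr rfl fun m _ => by ring
    have hT : Φ H - ∑ m ∈ Finset.range (n + 1), PowerSeries.coeff m f * uhat H ^ m
        = (H - 0) ^ (n + 1) * q H := hqe H
    rw [hsum, hψH, ← hT]
    ring
  rw [hsplit, circleIntegral.integral_add (CircleIntegrable.fun_sum _ fun m _ => hmint m) hψint,
    circleIntegral_eq_zero_of_differentiableOn_uhatDomain hψd,
    circleIntegral.integral_fun_sum fun m _ => hmint m, Finset.sum_range_succ,
    Finset.sum_eq_zero fun m hm => ?_]
  · rw [circleIntegral.integral_const_mul, circleIntegral_uhat_pow_self]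
    ring
  · rw [circleIntegral.integral_const_mul,
      circleIntegral_uhat_pow_of_lt (Finset.mem_range.1 hm), mul_zero]

theorem norm_cubicFactor_ge {H : ℂ} (hH : ‖H‖ = 1) :
    3 * (1 + ‖1 - H‖ ^ 4 / 6) ≤ ‖cubicFactor H‖ := by
  have h1 : H.re ^ 2 + H.im ^ 2 = 1 := by
    rw [← complex_norm_sq_eq, hH]; norm_num
  have hs : ‖1 - H‖ ^ 2 = 2 - 2 * H.re := by
    rw [complex_norm_sq_eq]
    simp
    linarith
  have hD : ‖cubicFactor H‖ ^ 2 = 9 + 12 * (‖1 - H‖ ^ 2) ^ 2 + 10 * (‖1 - H‖ ^ 2) ^ 3 := by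
    rw [hs, complex_norm_sq_eq]
    have him : H.im ^ 2 = 1 - H.re ^ 2 := by linarith
    have e1 : (cubicFactor H).re
        = 10 - 12 * H.re + 6 * (H.re ^ 2 - H.im ^ 2) - (H.re ^ 3 - 3 * H.re * H.im ^ 2) := by
      simp [cubicFactor, pow_succ]; ring
    have e2 : (cubicFactor H).im
        = H.im * (-12 + 12 * H.re - (3 * H.re ^ 2 - H.im ^ 2)) := by
      simp [cubicFactor, pow_succ]; ring
    rw [e1, e2, mul_pow, him]
    ring
  have hle : ‖1 - H‖ ^ 2 ≤ 4 := by
    rw [hs]; nlinarith [sq_nonneg H.im]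
  refine le_of_sq_le_sq ?_ (norm_nonneg _)
  have h4 : ‖1 - H‖ ^ 4 = (‖1 - H‖ ^ 2) ^ 2 := by ring
  rw [hD, h4]
  set s := ‖1 - H‖ ^ 2
  have hs0 : 0 ≤ s := by positivity
  nlinarith [mul_nonneg (sq_nonneg s) (by nlinarith : (0 : ℝ) ≤ 16 - s ^ 2), pow_nonneg hs0 3]

theorem mul_pow_three_le {y : ℝ} (hy : 0 ≤ y) {n : ℕ} (hn : 3 ≤ n) :
    (n * y) ^ 3 ≤ 27 * (1 + y) ^ (n + 1) := by
  have hn' : (1 : ℝ) ≤ n / 3 := by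
    rw [le_div_iff₀ (by norm_num)]
    exact_mod_cast (by simpa using hn)
  have h1 := one_add_mul_self_le_rpow_one_add (by linarith : -1 ≤ y) hn'
  have h2 : ((1 + y) ^ ((n : ℝ) / 3)) ^ 3 = (1 + y) ^ n := by
    rw [← Real.rpow_natCast, ← Real.rpow_mul (by positivity), ← Real.rpow_natCast]
    congr 1
    push_cast
    ring
  have h3 : (n / 3 * y) ^ 3 ≤ (1 + y) ^ n := by
    rw [← h2]
    gcongr
    linarith
  have h4 : (1 + y) ^ n ≤ (1 + y) ^ (n + 1) := pow_le_pow_right₀ (by linarith) (by omega)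
  calc (n * y) ^ 3 = 27 * (n / 3 * y) ^ 3 := by ring
    _ ≤ 27 * (1 + y) ^ (n + 1) := by linarith

/-- A function vanishing to order `10` at the critical point has coefficients
`O(u_c⁻ⁿ n⁻³)`. -/
theorem HasUhatSeries.exists_norm_coeff_le {f : PowerSeries ℂ} {S : ℂ → ℂ}
    (hf : HasUhatSeries f fun H => (1 - H) ^ 10 * S H) (hS : DifferentiableOn ℂ S uhatDomain) :
    ∃ C : ℝ, ∀ n : ℕ, 3 ≤ n → ‖PowerSeries.coeff n f‖ * uc ^ n ≤ C / n ^ 3 := by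
  obtain ⟨M, hM⟩ := (isCompact_sphere (0 : ℂ) 1).exists_bound_of_continuousOn
    (f := fun H => S H * (10 - 4 * H) / 3)
    (((hS.continuousOn.mono fun H hH => mem_uhatDomain_of_mem_sphere hH).mul
      (by fun_prop)).div_const _)
  have hucpos := uc_pos
  refine ⟨M * 27 * 6 ^ 3, fun n hn => ?_⟩
  have hn0 : (0 : ℝ) < n := by exact_mod_cast (by omega : 0 < n)
  have hbound : ∀ H ∈ Metric.sphere (0 : ℂ) 1,
      ‖(1 - H) ^ 10 * S H * deriv uhat H / uhat H ^ (n + 1)‖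
        ≤ M * 27 * 6 ^ 3 / n ^ 3 / uc ^ n := by
    intro H hH
    have hH1 : ‖H‖ = 1 := by simpa using hH
    have hD := norm_cubicFactor_ge hH1
    set y : ℝ := ‖1 - H‖ ^ 4 / 6 with hy
    have hy0 : 0 ≤ y := by positivity
    have hu : uc ^ (n + 1) * (1 + y) ^ (n + 1) ≤ ‖uhat H ^ (n + 1)‖ := by
      rw [norm_pow, ← mul_pow, uhat_eq]
      gcongr
      rw [norm_mul, norm_mul, hH1, norm_div, Complex.norm_real, Real.norm_of_nonneg hucpos.le]
      simp only [Complex.norm_ofNat, mul_one]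
      calc uc * (1 + y) = uc / 3 * (3 * (1 + y)) := by ring
        _ ≤ _ := by gcongr
    have hMnn : 0 ≤ M := (norm_nonneg _).trans (hM H hH)
    have hnum : ‖(1 - H) ^ 10 * S H * deriv uhat H‖ ≤ uc * (6 ^ 3 * y ^ 3) * M := by
      have : (1 - H) ^ 10 * S H * deriv uhat H
          = uc * (1 - H) ^ 12 * (S H * (10 - 4 * H) / 3) := by
        rw [deriv_uhat]; ring
      rw [this, norm_mul, norm_mul, Complex.norm_real, Real.norm_of_nonneg hucpos.le, norm_pow]
      have h12 : ‖1 - H‖ ^ 12 = 6 ^ 3 * y ^ 3 := by rw [hy]; ring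
      rw [h12]
      gcongr
      exact hM H hH
    rw [norm_div, div_div, div_le_div_iff₀ (lt_of_lt_of_le (by positivity) hu) (by positivity)]
    have h3 := mul_pow_three_le hy0 hn
    calc ‖(1 - H) ^ 10 * S H * deriv uhat H‖ * (n ^ 3 * uc ^ n)
        ≤ uc * (6 ^ 3 * y ^ 3) * M * (n ^ 3 * uc ^ n) := by gcongr
      _ = M * 6 ^ 3 * uc ^ (n + 1) * (n * y) ^ 3 := by ring
      _ ≤ M * 6 ^ 3 * uc ^ (n + 1) * (27 * (1 + y) ^ (n + 1)) := by gcongr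
      _ = M * 27 * 6 ^ 3 * (uc ^ (n + 1) * (1 + y) ^ (n + 1)) := by ring
      _ ≤ M * 27 * 6 ^ 3 * ‖uhat H ^ (n + 1)‖ := by gcongr
  have hdiff : DifferentiableOn ℂ (fun H => (1 - H) ^ 10 * S H) uhatDomain :=
    (Differentiable.differentiableOn (by fun_prop)).mul hS
  have hI := circleIntegral.norm_integral_le_of_norm_le_const zero_le_one hbound
  rw [hf.coeff_eq_circleIntegral hdiff n, norm_mul] at hI
  have hpi : ‖(2 * Real.pi * Complex.I : ℂ)‖ = 2 * Real.pi := by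
    simp [abs_of_pos Real.pi_pos]
  rw [hpi, mul_one] at hI
  have := le_of_mul_le_mul_left hI (by positivity)
  rwa [le_div_iff₀ (by positivity)] at this

theorem ring_choose_add_sub_one_eq (s : ℂ) (n : ℕ) :
    Ring.choose (s + n - 1) n = (∏ j ∈ Finset.range n, (s + j)) / n.factorial := by
  have h1 : Ring.choose (s + n - 1) n = Ring.multichoose s n := by
    rw [Ring.choose]; congr 1; ring
  have h2 := Ring.factorial_nsmul_multichoose_eq_ascPochhammer s n
  have h3 : (ascPochhammer ℕ n).smeval s = ∏ j ∈ Finset.range n, (s + j) := by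
    rw [Polynomial.ascPochhammer_smeval_eq_eval]
    clear h1 h2
    induction n with
    | zero => simp
    | succ n ih => rw [ascPochhammer_succ_eval, ih, Finset.prod_range_succ]
  rw [h1, eq_div_iff (by exact_mod_cast n.factorial_ne_zero), ← h3, ← h2, nsmul_eq_mul, mul_comm]

/-- The coefficients of `(1 - x) ^ (-s)`. -/
noncomputable def binomialCoeff (s : ℝ) (n : ℕ) : ℝ :=
  (∏ j ∈ Finset.range n, (s + j)) / n.factorial

theorem tendsto_binomialCoeff (s : ℝ) :
    Tendsto (fun n : ℕ => binomialCoeff s n * (n : ℝ) ^ (1 - s)) atTop (𝓝 (Real.Gamma s)⁻¹) := by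
  by_cases hs : ∃ m : ℕ, s = -m
  · obtain ⟨m, rfl⟩ := hs
    rw [Real.Gamma_neg_nat_eq_zero, inv_zero]
    refine tendsto_const_nhds.congr' ?_
    filter_upwards [eventually_gt_atTop m] with n hn
    rw [binomialCoeff, Finset.prod_eq_zero (Finset.mem_range.2 hn) (by ring)]
    simp
  · push Not at hs
    have h1 := (Real.GammaSeq_tendsto_Gamma s).inv₀ (Real.Gamma_ne_zero hs)
    have h2 : Tendsto (fun n : ℕ => (n : ℝ) / (n + s)) atTop (𝓝 1) :=
      tendsto_natCast_div_add_atTop s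
    have h3 := h1.mul h2
    rw [mul_one] at h3
    refine h3.congr' ?_
    filter_upwards [eventually_gt_atTop 0] with n hn
    have hn0 : (0 : ℝ) < n := by exact_mod_cast hn
    have hne : (n : ℝ) + s ≠ 0 := fun h => hs n (by linarith)
    rw [binomialCoeff, Real.GammaSeq, Finset.prod_range_succ, Real.rpow_sub hn0, Real.rpow_one,
      add_comm s n]
    have := (Real.rpow_pos_of_pos hn0 s).ne'
    have hf : (n.factorial : ℝ) ≠ 0 := by exact_mod_cast n.factorial_ne_zero
    field_simp

/-- `(1 - û / u_c) ^ (k / 3)`, continued analytically to `uhatDomain`. -/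
noncomputable def cubeRootPower (k : ℕ) (H : ℂ) : ℂ := (1 - H) ^ k * ((3 - H) / 3) ^ ((k : ℂ) / 3)

theorem three_sub_div_mem_slitPlane {H : ℂ} (hH : H ∈ uhatDomain) :
    (3 - H) / 3 ∈ Complex.slitPlane := by
  left
  have h := hH.2
  have : ((3 - H) / 3).re = (3 - H.re) / 3 := by simp
  rw [this]
  linarith

theorem differentiableOn_cpow_three_sub (a : ℂ) :
    DifferentiableOn ℂ (fun H : ℂ => ((3 - H) / 3) ^ a) uhatDomain :=
  DifferentiableOn.cpow (Differentiable.differentiableOn (by fun_prop))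
    (differentiableOn_const _) fun _ hH => three_sub_div_mem_slitPlane hH

theorem one_sub_uhat_div (H : ℂ) : 1 - uhat H / uc = (1 - H) ^ 3 * ((3 - H) / 3) := by
  have := uc_ne_zero
  rw [uhat]
  field_simp
  ring

theorem cubeRootPower_eventuallyEq (k : ℕ) :
    (fun H => (1 - uhat H / uc) ^ ((k : ℂ) / 3)) =ᶠ[𝓝 0] cubeRootPower k := by
  set L : ℂ → ℂ := fun H => 3 * Complex.log (1 - H) + Complex.log ((3 - H) / 3) with hL
  have hLc : ContinuousAt L 0 := by
    refine ContinuousAt.add (continuousAt_const.mul (ContinuousAt.clog (by fun_prop) ?_))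
      (ContinuousAt.clog (by fun_prop) ?_) <;> simp
  have hL0 : L 0 = 0 := by simp [hL]
  have hsmall : ∀ᶠ H in 𝓝 (0 : ℂ), |(L H).im| < Real.pi := by
    have : ContinuousAt (fun H => |(L H).im|) 0 := (Complex.continuous_im.continuousAt.comp hLc).abs
    exact this.eventually_lt continuousAt_const (by simp [hL0, Real.pi_pos])
  have h1 : ∀ᶠ H in 𝓝 (0 : ℂ), 1 - H ≠ 0 :=
    ContinuousAt.eventually_ne (by fun_prop) (by simp)
  have h2 : ∀ᶠ H in 𝓝 (0 : ℂ), (3 - H) / 3 ≠ 0 :=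
    ContinuousAt.eventually_ne (by fun_prop) (by simp)
  filter_upwards [hsmall, h1, h2] with H hs h1 h2
  have hexp : Complex.exp (L H) = (1 - H) ^ 3 * ((3 - H) / 3) := by
    rw [hL, Complex.exp_add, Complex.exp_log h2, ← Complex.exp_log h1, ← Complex.exp_nat_mul,
      Complex.exp_log h1]
    norm_num
  have hlog : Complex.log ((1 - H) ^ 3 * ((3 - H) / 3)) = L H := by
    rw [← hexp, Complex.log_exp (abs_lt.1 hs).1 (abs_lt.1 hs).2.le]
  have hpow : (1 - H) ^ k = Complex.exp (k * Complex.log (1 - H)) := by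
    rw [Complex.exp_nat_mul, Complex.exp_log h1]
  rw [one_sub_uhat_div, cubeRootPower, Complex.cpow_def_of_ne_zero (mul_ne_zero (pow_ne_zero _ h1) h2),
    Complex.cpow_def_of_ne_zero h2, hlog, hpow, ← Complex.exp_add]
  congr 1
  simp only [hL]
  ring

theorem hasUhatSeries_cubeRootPower (k : ℕ) :
    HasUhatSeries (PowerSeries.mk fun n => (binomialCoeff (-(k / 3)) n : ℂ) * ((uc : ℂ) ^ n)⁻¹)
      (cubeRootPower k) := by
  refine HasUhatSeries.congr ?_ (cubeRootPower_eventuallyEq k)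
  have hsmall : ∀ᶠ H in 𝓝 (0 : ℂ), ‖uhat H / uc‖ < 1 := by
    have : ContinuousAt (fun H => ‖uhat H / uc‖) 0 :=
      (differentiable_uhat.continuous.div_const _).norm.continuousAt
    exact this.eventually_lt continuousAt_const (by simp [uhat_zero])
  filter_upwards [hsmall] with H hH
  have h := (Complex.one_div_one_sub_cpow_hasFPowerSeriesOnBall_zero (-((k : ℂ) / 3))).hasSum
    (y := uhat H / uc) (by rwa [← ENNReal.ofReal_one, Metric.eball_ofReal, mem_ball_zero_iff])
  rw [zero_add, Complex.cpow_neg, one_div, inv_inv] at h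
  suffices he : (fun n : ℕ => PowerSeries.coeff n (PowerSeries.mk fun n =>
      (binomialCoeff (-(k / 3)) n : ℂ) * ((uc : ℂ) ^ n)⁻¹) * uhat H ^ n) = _ by
    rw [he]; exact h
  funext n
  rw [FormalMultilinearSeries.ofScalars_apply_eq, ring_choose_add_sub_one_eq, PowerSeries.coeff_mk,
    binomialCoeff, smul_eq_mul, div_pow]
  push_cast
  ring

theorem exists_cubeRootPower_expansion (N k : ℕ) {q : ℂ → ℂ}
    (hq : DifferentiableOn ℂ q uhatDomain) :
    ∃ (l : ℕ → ℂ) (S : ℂ → ℂ), DifferentiableOn ℂ S uhatDomain ∧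
      (∀ H, (1 - H) ^ k * q H
        = ∑ j ∈ Finset.range N, l j * cubeRootPower (k + j) H + (1 - H) ^ (k + N) * S H) ∧
      (0 < N → l 0 = q 1 * ((2 / 3 : ℂ) ^ ((k : ℂ) / 3))⁻¹) := by
  induction N generalizing k q with
  | zero => exact ⟨0, q, hq, by simp, by simp⟩
  | succ N ih =>
    set c : ℂ := q 1 * ((2 / 3 : ℂ) ^ ((k : ℂ) / 3))⁻¹ with hc
    set p : ℂ → ℂ := fun H => q H - c * ((3 - H) / 3) ^ ((k : ℂ) / 3) with hp
    have hpd : DifferentiableOn ℂ p uhatDomain :=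
      hq.sub ((differentiableOn_cpow_three_sub _).const_mul c)
    have hp1 : p 1 = 0 := by
      have h0 : (2 / 3 : ℂ) ^ ((k : ℂ) / 3) ≠ 0 := by simp [Complex.cpow_eq_zero_iff]
      have h1 : ((3 : ℂ) - 1) / 3 = 2 / 3 := by norm_num
      simp only [hp, hc, h1]
      rw [inv_mul_cancel_right₀ h0, sub_self]
    have hfac : ∀ H, p H = (1 - H) * -dslope p 1 H := fun H => by
      have := sub_smul_dslope p 1 H
      rw [hp1, sub_zero, smul_eq_mul] at this
      rw [← this]; ring
    obtain ⟨l, S, hS, hsum, -⟩ := ih (k + 1)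
      (((Complex.differentiableOn_dslope uhatDomain_mem_nhds_one).2 hpd).neg)
    refine ⟨fun j => Nat.casesOn j c l, S, hS, fun H => ?_, fun _ => rfl⟩
    have h1 := hsum H
    rw [Finset.sum_range_succ']
    have h2 : (1 - H) ^ k * q H
        = (1 - H) ^ (k + 1) * (-dslope p 1) H + c * cubeRootPower k H := by
      have h3 : q H = p H + c * ((3 - H) / 3) ^ ((k : ℂ) / 3) := by simp [hp]
      rw [h3, hfac H, cubeRootPower, Pi.neg_apply]
      ring
    have e : ∀ j, k + 1 + j = k + (j + 1) := fun j => by ring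
    rw [h2, h1]
    simp only [e, add_zero]
    change _ = _ + c * cubeRootPower k H + _
    ring

theorem HasUhatSeries.sum {f : ℕ → PowerSeries ℂ} {F : ℕ → ℂ → ℂ} (N : ℕ)
    (h : ∀ j, HasUhatSeries (f j) (F j)) :
    HasUhatSeries (∑ j ∈ Finset.range N, f j) (fun H => ∑ j ∈ Finset.range N, F j H) := by
  induction N with
  | zero => simpa using HasUhatSeries.const 0
  | succ N ih => simpa [Finset.sum_range_succ] using ih.add (h N)

theorem tendsto_binomialCoeff_cubeRoot (j : ℕ) :
    Tendsto (fun n : ℕ => binomialCoeff (-(((4 + j : ℕ) : ℝ) / 3)) n * (n : ℝ) ^ ((7 : ℝ) / 3)) atTop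
      (𝓝 (if j = 0 then (Real.Gamma (-4 / 3))⁻¹ else 0)) := by
  have h1 := tendsto_binomialCoeff (-(((4 + j : ℕ) : ℝ) / 3))
  have h2 : Tendsto (fun n : ℕ => (n : ℝ) ^ (-((j : ℝ) / 3))) atTop
      (𝓝 (if j = 0 then 1 else 0)) := by
    split_ifs with hj
    · simp [hj]
    · exact (tendsto_rpow_neg_atTop (by positivity)).comp tendsto_natCast_atTop_atTop
  have h3 := h1.mul h2
  have hlim : (Real.Gamma (-(((4 + j : ℕ) : ℝ) / 3)))⁻¹ * (if j = 0 then 1 else 0)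
      = if j = 0 then (Real.Gamma (-4 / 3))⁻¹ else 0 := by
    split_ifs with hj
    · subst hj; norm_num
    · simp
  rw [hlim] at h3
  refine h3.congr' ?_
  filter_upwards [eventually_gt_atTop 0] with n hn
  have hn0 : (0 : ℝ) < n := by exact_mod_cast hn
  rw [mul_assoc, ← Real.rpow_add hn0]
  congr 2
  push_cast
  ring

/-- Singularity analysis for functions of `û` with leading singularity of exponent `4 / 3`. -/
theorem HasUhatSeries.tendsto_coeff_of_pow_four {f : PowerSeries ℂ} {q : ℂ → ℂ}
    (hf : HasUhatSeries f fun H => (1 - H) ^ 4 * q H) (hq : DifferentiableOn ℂ q uhatDomain) :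
    Tendsto (fun n : ℕ => PowerSeries.coeff n f * (uc : ℂ) ^ n * (((n : ℝ) ^ ((7 : ℝ) / 3) : ℝ) : ℂ))
      atTop (𝓝 (q 1 * ((2 / 3 : ℂ) ^ ((4 : ℂ) / 3))⁻¹ * ((Real.Gamma (-4 / 3))⁻¹ : ℝ))) := by
  obtain ⟨l, S, hS, hsum, hl0⟩ := exists_cubeRootPower_expansion 6 4 hq
  set b : ℕ → PowerSeries ℂ := fun j => PowerSeries.C (l j) *
    PowerSeries.mk fun n => (binomialCoeff (-(((4 + j : ℕ) : ℝ) / 3)) n : ℂ) * ((uc : ℂ) ^ n)⁻¹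
    with hb
  have hbs : ∀ j, HasUhatSeries (b j) (fun H => l j * cubeRootPower (4 + j) H) := fun j =>
    (HasUhatSeries.const _).mul (hasUhatSeries_cubeRootPower (4 + j))
  set r : PowerSeries ℂ := f - ∑ j ∈ Finset.range 6, b j with hr
  have hrs : HasUhatSeries r (fun H => (1 - H) ^ 10 * S H) :=
    (hf.sub (HasUhatSeries.sum 6 hbs)).congr (Eventually.of_forall fun H => by
      simp only [hsum H]; ring)
  obtain ⟨C, hC⟩ := hrs.exists_norm_coeff_le hS
  have hr0 : Tendsto (fun n : ℕ => PowerSeries.coeff n r * (uc : ℂ) ^ n *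
      (((n : ℝ) ^ ((7 : ℝ) / 3) : ℝ) : ℂ)) atTop (𝓝 0) := by
    have hlim : Tendsto (fun n : ℕ => C * (n : ℝ) ^ (-((2 : ℝ) / 3))) atTop (𝓝 0) := by
      simpa using ((tendsto_rpow_neg_atTop (by norm_num : (0 : ℝ) < 2 / 3)).comp
        tendsto_natCast_atTop_atTop).const_mul C
    refine squeeze_zero_norm' ?_ hlim
    filter_upwards [eventually_ge_atTop 3] with n hn
    have hn0 : (0 : ℝ) < n := by exact_mod_cast (by omega : 0 < n)
    rw [norm_mul, norm_mul, norm_pow, Complex.norm_real, Complex.norm_real,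
      Real.norm_of_nonneg uc_pos.le, Real.norm_of_nonneg (by positivity)]
    calc _ ≤ C / n ^ 3 * (n : ℝ) ^ ((7 : ℝ) / 3) := by gcongr; exact hC n hn
      _ = C * (n : ℝ) ^ (-((2 : ℝ) / 3)) := by
        rw [show (-((2 : ℝ) / 3)) = 7 / 3 - (3 : ℕ) by norm_num, Real.rpow_sub hn0,
          Real.rpow_natCast]
        ring
  have hbt : ∀ j, Tendsto (fun n : ℕ => PowerSeries.coeff n (b j) * (uc : ℂ) ^ n *
      (((n : ℝ) ^ ((7 : ℝ) / 3) : ℝ) : ℂ)) atTop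
      (𝓝 (l j * ((if j = 0 then (Real.Gamma (-4 / 3))⁻¹ else 0 : ℝ) : ℂ))) := by
    intro j
    have h := ((Complex.continuous_ofReal.tendsto _).comp
      (tendsto_binomialCoeff_cubeRoot j)).const_mul (l j)
    refine h.congr fun n => ?_
    have := pow_ne_zero n uc_ne_zero
    simp only [hb, PowerSeries.coeff_C_mul, PowerSeries.coeff_mk, Function.comp_apply,
      Complex.ofReal_mul]
    field_simp
  have htot := hr0.add (tendsto_finsetSum (Finset.range 6) fun j _ => hbt j)
  have hlim : 0 + ∑ j ∈ Finset.range 6,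
      l j * ((if j = 0 then (Real.Gamma (-4 / 3))⁻¹ else 0 : ℝ) : ℂ)
      = q 1 * ((2 / 3 : ℂ) ^ ((4 : ℂ) / 3))⁻¹ * ((Real.Gamma (-4 / 3))⁻¹ : ℝ) := by
    have := hl0 (by norm_num)
    simp [Finset.sum_range_succ, this]
  rw [hlim] at htot
  refine htot.congr fun n => ?_
  rw [← Finset.sum_mul, ← Finset.sum_mul, ← add_mul, ← add_mul, ← map_sum, ← map_add, hr,
    sub_add_cancel]

/-- `Φ` is `φ + λ (1 - û / u_c) + μ (1 - H) ^ 4 + O((1 - H) ^ 5)` at the critical point `H = 1`. -/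
def HasCriticalExpansion (Φ : ℂ → ℂ) (φ μ : ℂ) : Prop :=
  ∃ l : ℂ, (fun H => Φ H - φ - l * (1 - uhat H / uc) - μ * (1 - H) ^ 4)
    =O[𝓝 1] fun H => (1 - H) ^ 5

theorem isBigO_one_sub_pow {m n : ℕ} (h : n ≤ m) :
    (fun H : ℂ => (1 - H) ^ m) =O[𝓝 1] fun H => (1 - H) ^ n := by
  obtain ⟨k, rfl⟩ := Nat.exists_eq_add_of_le h
  simp only [pow_add]
  have h1 : (fun H : ℂ => (1 - H) ^ k) =O[𝓝 1] fun _ => (1 : ℂ) :=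
    (Continuous.tendsto (by fun_prop : Continuous fun H : ℂ => (1 - H) ^ k) 1).isBigO_one ℂ
  simpa using (isBigO_refl (fun H : ℂ => (1 - H) ^ n) (𝓝 1)).mul h1

theorem HasUhatSeries.tendsto_coeff {f : PowerSeries ℂ} {Φ : ℂ → ℂ} {φ μ : ℂ}
    (hf : HasUhatSeries f Φ) (hΦ : DifferentiableOn ℂ Φ uhatDomain)
    (hexp : HasCriticalExpansion Φ φ μ) :
    Tendsto (fun n : ℕ => PowerSeries.coeff n f * (uc : ℂ) ^ n * (((n : ℝ) ^ ((7 : ℝ) / 3) : ℝ) : ℂ))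
      atTop (𝓝 (μ * ((2 / 3 : ℂ) ^ ((4 : ℂ) / 3))⁻¹ * ((Real.Gamma (-4 / 3))⁻¹ : ℝ))) := by
  obtain ⟨l, hl⟩ := hexp
  set Ψ : ℂ → ℂ := fun H => Φ H - φ - l * (1 - uhat H / uc) with hΨ
  have hΨd : DifferentiableOn ℂ Ψ uhatDomain :=
    (hΦ.sub_const φ).sub (Differentiable.differentiableOn
      (((differentiable_uhat.div_const _).const_sub 1).const_mul l))
  have hneg : ∀ n, (fun H : ℂ => (1 - H) ^ n) =O[𝓝[≠] 1] fun H => (H - 1) ^ n := fun n =>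
    IsBigO.of_bound 1 (Eventually.of_forall fun H => by
      rw [norm_pow, norm_pow, norm_sub_rev, one_mul])
  have hΨO : Ψ =O[𝓝[≠] 1] fun H => (H - 1) ^ 4 := by
    have h1 : Ψ =O[𝓝 1] fun H => (1 - H) ^ 4 := by
      have := (hl.trans (isBigO_one_sub_pow (by norm_num : 4 ≤ 5))).add
        ((isBigO_refl (fun H : ℂ => (1 - H) ^ 4) (𝓝 1)).const_mul_left μ)
      simpa using this
    exact (h1.mono nhdsWithin_le_nhds).trans (hneg 4)
  obtain ⟨q, hq, hqe⟩ := exists_eq_pow_mul_of_isBigO uhatDomain_mem_nhds_one 4 hΨd hΨO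
  have hqe' : ∀ H, Ψ H = (1 - H) ^ 4 * q H := fun H => by rw [hqe]; ring
  have hq1 : q 1 = μ := by
    have h1 : Tendsto (fun H => q H - μ) (𝓝[≠] 1) (𝓝 (q 1 - μ)) :=
      ((hq.differentiableAt uhatDomain_mem_nhds_one).continuousAt.tendsto.mono_left
        nhdsWithin_le_nhds).sub_const μ
    have h2 : (fun H => q H - μ) =O[𝓝[≠] 1] fun H => 1 - H := by
      obtain ⟨C, hC⟩ := (hl.mono (nhdsWithin_le_nhds (s := {(1 : ℂ)}ᶜ))).bound
      refine IsBigO.of_bound C ?_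
      filter_upwards [hC, self_mem_nhdsWithin] with H hH hne
      have hpos : 0 < ‖(1 - H) ^ 4‖ :=
        norm_pos_iff.2 (pow_ne_zero _ (sub_ne_zero.2 (Ne.symm hne)))
      have e1 : Φ H - φ - l * (1 - uhat H / uc) - μ * (1 - H) ^ 4 = (1 - H) ^ 4 * (q H - μ) := by
        have := hqe' H
        simp only [hΨ] at this
        rw [this]; ring
      rw [e1, pow_succ (1 - H) 4, norm_mul, norm_mul _ (1 - H), mul_left_comm] at hH
      exact le_of_mul_le_mul_left hH hpos
    have h3 : Tendsto (fun H : ℂ => 1 - H) (𝓝[≠] 1) (𝓝 0) := by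
      have : Tendsto (fun H : ℂ => 1 - H) (𝓝 1) (𝓝 (1 - 1)) :=
        Continuous.tendsto (by fun_prop) 1
      simpa using this.mono_left nhdsWithin_le_nhds
    exact sub_eq_zero.1 (tendsto_nhds_unique h1 (h2.trans_tendsto h3))
  set g : PowerSeries ℂ := f - PowerSeries.C φ
    - PowerSeries.C l * (PowerSeries.C 1 - PowerSeries.X * PowerSeries.C (uc : ℂ)⁻¹) with hg
  have hgs : HasUhatSeries g (fun H => (1 - H) ^ 4 * q H) :=
    ((hf.sub (.const φ)).sub ((HasUhatSeries.const l).mul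
      ((HasUhatSeries.const 1).sub (HasUhatSeries.X.mul (.const _))))).congr
      (Eventually.of_forall fun H => by simp only [← hqe', hΨ, div_eq_mul_inv])
  rw [← hq1]
  refine (hgs.tendsto_coeff_of_pow_four hq).congr' ?_
  filter_upwards [eventually_ge_atTop 2] with n hn
  obtain ⟨m, rfl⟩ := Nat.exists_eq_add_of_le hn
  congr 2
  have h2 : 2 + m = (m + 1) + 1 := by ring
  simp [hg, h2, PowerSeries.coeff_X, PowerSeries.coeff_one]

namespace HasCriticalExpansion

variable {Φ Ψ : ℂ → ℂ} {φ ψ μ ν : ℂ}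

theorem isBigO_one_sub_uhat_div :
    (fun H : ℂ => 1 - uhat H / uc) =O[𝓝 1] fun H => (1 - H) ^ 3 := by
  have h1 : (fun H : ℂ => (3 - H) / 3) =O[𝓝 1] fun _ => (1 : ℂ) :=
    (Continuous.tendsto (by fun_prop : Continuous fun H : ℂ => (3 - H) / 3) 1).isBigO_one ℂ
  simpa [one_sub_uhat_div] using (isBigO_refl (fun H : ℂ => (1 - H) ^ 3) (𝓝 1)).mul h1

theorem congr (h : HasCriticalExpansion Φ φ μ) (he : Φ =ᶠ[𝓝 1] Ψ) :
    HasCriticalExpansion Ψ φ μ := by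
  obtain ⟨l, hl⟩ := h
  refine ⟨l, hl.congr' ?_ EventuallyEq.rfl⟩
  filter_upwards [he] with H hH
  rw [hH]

theorem const (c : ℂ) : HasCriticalExpansion (fun _ => c) c 0 :=
  ⟨0, by simpa using isBigO_zero _ _⟩

theorem uhat : HasCriticalExpansion uhat uc 0 := by
  refine ⟨-uc, (isBigO_zero _ _).congr (fun H => ?_) fun _ => rfl⟩
  have := uc_ne_zero
  field_simp
  ring

theorem add (hΦ : HasCriticalExpansion Φ φ μ) (hΨ : HasCriticalExpansion Ψ ψ ν) :
    HasCriticalExpansion (fun H => Φ H + Ψ H) (φ + ψ) (μ + ν) := by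
  obtain ⟨l, hl⟩ := hΦ
  obtain ⟨m, hm⟩ := hΨ
  exact ⟨l + m, (hl.add hm).congr (fun H => by ring) fun _ => rfl⟩

theorem isBigO_one (hΦ : HasCriticalExpansion Φ φ μ) : Φ =O[𝓝 1] fun _ => (1 : ℂ) := by
  obtain ⟨l, hl⟩ := hΦ
  have h0 : ∀ n, (fun H : ℂ => (1 - H) ^ n) =O[𝓝 1] fun _ => (1 : ℂ) := fun n => by
    simpa using isBigO_one_sub_pow (Nat.zero_le n)
  have h1 := (((hl.trans (h0 5)).add ((h0 4).const_mul_left μ)).add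
    ((isBigO_one_sub_uhat_div.trans (h0 3)).const_mul_left l)).add
      (isBigO_refl (fun _ => (1 : ℂ)) (𝓝 1) |>.const_mul_left φ)
  exact h1.congr (fun H => by ring) fun _ => rfl

theorem mul (hΦ : HasCriticalExpansion Φ φ μ) (hΨ : HasCriticalExpansion Ψ ψ ν) :
    HasCriticalExpansion (fun H => Φ H * Ψ H) (φ * ψ) (φ * ν + μ * ψ) := by
  have hΨ1 := hΨ.isBigO_one
  obtain ⟨l, hl⟩ := hΦ
  obtain ⟨m, hm⟩ := hΨ
  have h3 : ∀ a b : ℂ, (fun H : ℂ => a * (1 - _root_.uhat H / uc) + b * (1 - H) ^ 4)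
      =O[𝓝 1] fun H => (1 - H) ^ 3 := fun a b =>
    (isBigO_one_sub_uhat_div.const_mul_left a).add
      ((isBigO_one_sub_pow (by norm_num : 3 ≤ 4)).const_mul_left b)
  have hφ : (fun H : ℂ => φ + (l * (1 - _root_.uhat H / uc) + μ * (1 - H) ^ 4))
      =O[𝓝 1] fun _ => (1 : ℂ) :=
    (isBigO_const_const φ one_ne_zero _).add
      ((h3 l μ).trans (by simpa using isBigO_one_sub_pow (Nat.zero_le 3)))
  have e1 := hl.mul hΨ1
  have e2 := hφ.mul hm
  have e3 : _ =O[𝓝 (1 : ℂ)] fun H : ℂ => (1 - H) ^ 5 := ((h3 l μ).mul (h3 m ν)).trans <| by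
    simpa only [← pow_add] using isBigO_one_sub_pow (by norm_num : 5 ≤ 3 + 3)
  simp only [mul_one, one_mul] at e1 e2
  exact ⟨φ * m + l * ψ, ((e1.add e2).add e3).congr (fun H => by ring) fun _ => rfl⟩

theorem const_mul (hΦ : HasCriticalExpansion Φ φ μ) (c : ℂ) :
    HasCriticalExpansion (fun H => c * Φ H) (c * φ) (c * μ) := by
  simpa using (const c).mul hΦ

theorem sub (hΦ : HasCriticalExpansion Φ φ μ) (hΨ : HasCriticalExpansion Ψ ψ ν) :
    HasCriticalExpansion (fun H => Φ H - Ψ H) (φ - ψ) (μ - ν) := by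
  simpa [sub_eq_add_neg] using hΦ.add (hΨ.const_mul (-1))

theorem sum {ι : Type*} (s : Finset ι) {F : ι → ℂ → ℂ} {f m : ι → ℂ}
    (h : ∀ i ∈ s, HasCriticalExpansion (F i) (f i) (m i)) :
    HasCriticalExpansion (fun H => ∑ i ∈ s, F i H) (∑ i ∈ s, f i) (∑ i ∈ s, m i) := by
  classical
  induction s using Finset.induction_on with
  | empty => simpa using const 0
  | insert i s hi ih =>
    simp only [Finset.sum_insert hi]
    exact (h i (Finset.mem_insert_self i s)).add
      (ih fun j hj => h j (Finset.mem_insert_of_mem hj))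

/-- An expansion with an explicit remainder. -/
theorem of_eq {l : ℂ} {S : ℂ → ℂ} (hS : ContinuousAt S 1)
    (h : ∀ᶠ H in 𝓝 1, Φ H = φ + l * (1 - _root_.uhat H / uc) + μ * (1 - H) ^ 4
      + (1 - H) ^ 5 * S H) : HasCriticalExpansion Φ φ μ := by
  refine ⟨l, ?_⟩
  have h1 : S =O[𝓝 1] fun _ => (1 : ℂ) := hS.tendsto.isBigO_one ℂ
  have h2 := (isBigO_refl (fun H : ℂ => (1 - H) ^ 5) (𝓝 1)).mul h1
  simp only [mul_one] at h2
  refine h2.congr' ?_ EventuallyEq.rfl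
  filter_upwards [h] with H hH
  rw [hH]; ring

theorem uhat_inv : HasCriticalExpansion (fun H => (_root_.uhat H)⁻¹) (uc : ℂ)⁻¹ 0 := by
  have h1 : ContinuousAt (fun H : ℂ => (1 - H) * ((3 - H) / 3) ^ 2 * (_root_.uhat H)⁻¹) 1 :=
    ContinuousAt.mul (by fun_prop) (differentiable_uhat.continuous.continuousAt.inv₀
      (uhat_ne_zero (mem_of_mem_nhds uhatDomain_mem_nhds_one) one_ne_zero))
  refine of_eq (l := (uc : ℂ)⁻¹) h1 ?_
  filter_upwards [uhatDomain_mem_nhds_one, eventually_ne_nhds one_ne_zero] with H hH h0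
  have h2 := uhat_ne_zero hH h0
  have h3 := one_sub_uhat_div H
  have h4 := uc_ne_zero
  have h5 : (1 - H) ^ 5 * ((1 - H) * ((3 - H) / 3) ^ 2 * (_root_.uhat H)⁻¹)
      = (1 - _root_.uhat H / uc) ^ 2 * (_root_.uhat H)⁻¹ := by rw [h3]; ring
  rw [h5]
  field_simp
  ring

theorem Z0hat : HasCriticalExpansion Z0hat (3 * (2 + (Real.sqrt 7 : ℂ)) / 10) (3 / 20) := by
  refine of_eq (l := -(3 / 20) * (1 + 2 * (Real.sqrt 7 : ℂ)))
    (S := fun H => 3 / 10 + (1 - H) / 10) (by fun_prop) (Eventually.of_forall fun H => ?_)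
  rw [one_sub_uhat_div, _root_.Z0hat]
  ring

theorem Z1hat : HasCriticalExpansion Z1hat (3 * ((Real.sqrt 7 : ℂ) - 2) / (10 * uc))
    (1 / (20 * uc)) := by
  have hD : cubicFactor 1 ≠ 0 := (mem_of_mem_nhds uhatDomain_mem_nhds_one).1
  refine of_eq (l := -(3 / (20 * uc))) (S := fun H => (3 / (10 * uc)) *
    ((3 + (1 - H)) / (3 * cubicFactor H)))
    (by
      refine continuousAt_const.mul (ContinuousAt.div (by fun_prop)
        (continuousAt_const.mul continuous_cubicFactor.continuousAt) (by simpa using hD)))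
    ?_
  filter_upwards [continuous_cubicFactor.continuousAt.eventually_ne hD] with H hH
  have := uc_ne_zero
  rw [one_sub_uhat_div, _root_.Z1hat]
  change _ * (_ - _ / cubicFactor H) = _
  field_simp
  rw [cubicFactor]
  ring

end HasCriticalExpansion

theorem differentiable_Z0hat : Differentiable ℂ Z0hat := by unfold Z0hat; fun_prop

theorem differentiableOn_Z1hat : DifferentiableOn ℂ Z1hat uhatDomain :=
  ((by fun_prop : Differentiable ℂ fun H : ℂ => (Real.sqrt 7 : ℂ) - 1 + H).differentiableOn.sub
    (DifferentiableOn.div (by fun_prop) differentiable_cubicFactor.differentiableOn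
      fun _ hH => hH.1)).const_mul _

theorem sqrt_seven_sq : (Real.sqrt 7 : ℂ) ^ 2 = 7 := by
  exact_mod_cast Real.sq_sqrt (by norm_num : (0 : ℝ) ≤ 7)

theorem nuc_sq_sub_one_mul_tc : ((nuc : ℂ) ^ 2 - 1) * tc = 10 / 3 * uc := by
  rw [nuc, uc]
  push_cast
  linear_combination (4 * (tc : ℂ)) * sqrt_seven_sq

theorem nuc_sq_sub_one_mul_uc_sq : ((nuc : ℂ) ^ 2 - 1) * uc ^ 2 = 9 / 10 := by
  have h : (nuc ^ 2 - 1) * uc ^ 2 = 9 / 10 := by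
    have h7 : Real.sqrt 7 ^ 2 = 7 := Real.sq_sqrt (by norm_num)
    have hr : ((7 + Real.sqrt 7) ^ ((3 : ℝ) / 2)) ^ 2 = (7 + Real.sqrt 7) ^ 3 := by
      rw [← Real.rpow_natCast, ← Real.rpow_mul (by positivity), ← Real.rpow_natCast]
      norm_num
    have hpos : 0 < 7 + Real.sqrt 7 := by positivity
    have hn : nuc ^ 2 - 1 = 4 * (7 + Real.sqrt 7) := by
      rw [nuc]; linear_combination 4 * h7
    rw [hn, uc, tc, mul_pow, div_pow, mul_pow 8, hr, Real.sq_sqrt (by norm_num)]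
    field_simp
    norm_num
  have h2 := congrArg (Complex.ofReal) h
  push_cast at h2
  exact h2

theorem HasUhatSeries.continuousAt {f : PowerSeries ℂ} {F : ℂ → ℂ} (hf : HasUhatSeries f F) :
    ContinuousAt F 0 := by
  obtain ⟨S, hS, hSF⟩ := hf.hasFPowerSeriesAt
  have h1 : ContinuousAt (fun H => S (uhat H)) 0 :=
    ContinuousAt.comp' (by rw [uhat_zero]; exact hS.continuousAt)
      differentiable_uhat.continuous.continuousAt
  exact h1.congr (hSF.mono fun _ h => h.symm)

/-- Division by a multiple of `û` preserves critical expansions. -/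
theorem exists_div_uhat {R y : ℂ → ℂ} {r m b : ℂ} (hb : b ≠ 0)
    (hR : DifferentiableOn ℂ R uhatDomain) (hRe : HasCriticalExpansion R r m)
    (hy : ContinuousAt y 0) (h : ∀ᶠ K in 𝓝 0, b * uhat K * y K = R K) :
    ∃ Φ : ℂ → ℂ, DifferentiableOn ℂ Φ uhatDomain ∧ Φ =ᶠ[𝓝 0] y ∧
      ∀ φ μ : ℂ, b * uc * φ = r → b * uc * μ = m → HasCriticalExpansion Φ φ μ := by
  have huc := uc_ne_zero
  have hR0 : R 0 = 0 := by simpa [uhat_zero] using h.self_of_nhds.symm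
  have hfac : ∀ H, R H = H * dslope R 0 H := fun H => by
    have := sub_smul_dslope R 0 H
    rwa [hR0, sub_zero, sub_zero, smul_eq_mul, eq_comm] at this
  have hΦ : DifferentiableOn ℂ (fun K => dslope R 0 K / (b * (uc / 3) * cubicFactor K))
      uhatDomain :=
    ((Complex.differentiableOn_dslope uhatDomain_mem_nhds_zero).2 hR).div
      (differentiable_cubicFactor.differentiableOn.const_mul _)
      fun H hH => mul_ne_zero (mul_ne_zero hb (div_ne_zero huc (by norm_num))) hH.1
  have hdiv : ∀ K ∈ uhatDomain, K ≠ 0 →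
      dslope R 0 K / (b * (uc / 3) * cubicFactor K) = b⁻¹ * (R K * (uhat K)⁻¹) := by
    intro K hK hK0
    have := hK.1
    rw [hfac K, uhat_eq]
    field_simp
  refine ⟨_, hΦ, ?_, fun φ μ hφ hμ => ?_⟩
  · rw [← (hΦ.differentiableAt uhatDomain_mem_nhds_zero).continuousAt
      |>.eventuallyEq_nhds_iff_eventuallyEq_nhdsNE hy]
    filter_upwards [h.filter_mono nhdsWithin_le_nhds, self_mem_nhdsWithin,
      nhdsWithin_le_nhds uhatDomain_mem_nhds_zero] with K hK hK0 hKd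
    have := uhat_ne_zero hKd hK0
    rw [hdiv K hKd hK0, ← hK]
    field_simp
  · have h1 := (hRe.mul HasCriticalExpansion.uhat_inv).const_mul b⁻¹
    have e1 : b⁻¹ * (r * (uc : ℂ)⁻¹) = φ := by rw [← hφ]; field_simp
    have e2 : b⁻¹ * (r * 0 + m * (uc : ℂ)⁻¹) = μ := by rw [← hμ]; field_simp; ring
    rw [e1, e2] at h1
    refine h1.congr ?_
    filter_upwards [uhatDomain_mem_nhds_one, eventually_ne_nhds one_ne_zero] with K hK hK0
    exact (hdiv K hK hK0).symm

/-- Coefficientwise analyticity and critical expansion of a family of power series. -/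
def HasCoeffExpansion (F : ℂ → PowerSeries ℂ) (f m : PowerSeries ℂ) : Prop :=
  ∀ p, DifferentiableOn ℂ (fun K => PowerSeries.coeff p (F K)) uhatDomain ∧
    HasCriticalExpansion (fun K => PowerSeries.coeff p (F K)) (PowerSeries.coeff p f)
      (PowerSeries.coeff p m)

namespace HasCoeffExpansion

variable {F G : ℂ → PowerSeries ℂ} {f m g n : PowerSeries ℂ}

theorem const (f : PowerSeries ℂ) : HasCoeffExpansion (fun _ => f) f 0 := fun p =>
  ⟨differentiableOn_const _, by simpa using HasCriticalExpansion.const _⟩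

theorem C {Φ : ℂ → ℂ} {φ μ : ℂ} (hd : DifferentiableOn ℂ Φ uhatDomain)
    (h : HasCriticalExpansion Φ φ μ) :
    HasCoeffExpansion (fun K => PowerSeries.C (Φ K)) (PowerSeries.C φ) (PowerSeries.C μ) := by
  intro p
  simp only [PowerSeries.coeff_C]
  split_ifs
  · exact ⟨hd, h⟩
  · exact ⟨differentiableOn_const _, HasCriticalExpansion.const 0⟩

theorem sub (hF : HasCoeffExpansion F f m) (hG : HasCoeffExpansion G g n) :
    HasCoeffExpansion (fun K => F K - G K) (f - g) (m - n) := fun p => by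
  simp only [map_sub]
  exact ⟨(hF p).1.sub (hG p).1, (hF p).2.sub (hG p).2⟩

theorem add (hF : HasCoeffExpansion F f m) (hG : HasCoeffExpansion G g n) :
    HasCoeffExpansion (fun K => F K + G K) (f + g) (m + n) := fun p => by
  simp only [map_add]
  exact ⟨(hF p).1.add (hG p).1, (hF p).2.add (hG p).2⟩

theorem mul (hF : HasCoeffExpansion F f m) (hG : HasCoeffExpansion G g n) :
    HasCoeffExpansion (fun K => F K * G K) (f * g) (f * n + m * g) := fun p => by
  simp only [map_add, PowerSeries.coeff_mul, ← Finset.sum_add_distrib]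
  exact ⟨DifferentiableOn.fun_sum fun i _ => (hF i.1).1.mul (hG i.2).1,
    HasCriticalExpansion.sum _ fun i _ => (hF i.1).2.mul (hG i.2).2⟩

end HasCoeffExpansion

/-- Solutions of `b û Y = X Λ Y - N` inherit critical expansions from `Λ` and `N`. -/
theorem exists_coeff_expansion {b : ℂ} (hb : b ≠ 0) {Λ N Y : ℂ → PowerSeries ℂ}
    {Λ₀ Λ₄ N₀ N₄ Y₀ Y₄ : PowerSeries ℂ}
    (hΛ : HasCoeffExpansion Λ Λ₀ Λ₄) (hN : HasCoeffExpansion N N₀ N₄)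
    (hYc : ∀ p, ContinuousAt (fun K => PowerSeries.coeff p (Y K)) 0)
    (hY : ∀ᶠ K in 𝓝 0, PowerSeries.C (b * uhat K) * Y K = PowerSeries.X * (Λ K * Y K) - N K)
    (hY₀ : PowerSeries.C (b * uc) * Y₀ = PowerSeries.X * (Λ₀ * Y₀) - N₀)
    (hY₄ : PowerSeries.C (b * uc) * Y₄ = PowerSeries.X * (Λ₀ * Y₄ + Λ₄ * Y₀) - N₄) (p : ℕ) :
    ∃ Φ : ℂ → ℂ, DifferentiableOn ℂ Φ uhatDomain ∧
      Φ =ᶠ[𝓝 0] (fun K => PowerSeries.coeff p (Y K)) ∧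
      HasCriticalExpansion Φ (PowerSeries.coeff p Y₀) (PowerSeries.coeff p Y₄) := by
  induction p using Nat.strong_induction_on with
  | _ p ih =>
    have hex : ∀ m, ∃ Φ : ℂ → ℂ, m < p → DifferentiableOn ℂ Φ uhatDomain ∧
        Φ =ᶠ[𝓝 0] (fun K => PowerSeries.coeff m (Y K)) ∧
        HasCriticalExpansion Φ (PowerSeries.coeff m Y₀) (PowerSeries.coeff m Y₄) := fun m => by
      by_cases hm : m < p
      · obtain ⟨Φ, h⟩ := ih m hm
        exact ⟨Φ, fun _ => h⟩
      · exact ⟨0, fun h => absurd h hm⟩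
    choose Φ hΦ using hex
    have key : ∃ R : ℂ → ℂ, DifferentiableOn ℂ R uhatDomain ∧
        HasCriticalExpansion R (b * uc * PowerSeries.coeff p Y₀)
          (b * uc * PowerSeries.coeff p Y₄) ∧
        ∀ᶠ K in 𝓝 0, b * uhat K * PowerSeries.coeff p (Y K) = R K := by
      rw [← PowerSeries.coeff_C_mul, ← PowerSeries.coeff_C_mul, hY₀, hY₄]
      cases p with
      | zero =>
        refine ⟨fun K => 0 - PowerSeries.coeff 0 (N K), (hN 0).1.const_sub 0, ?_, ?_⟩
        · simpa using (HasCriticalExpansion.const 0).sub (hN 0).2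
        · filter_upwards [hY] with K hK
          rw [← PowerSeries.coeff_C_mul, hK]
          simp
      | succ p =>
        have hlt : ∀ i ∈ Finset.HasAntidiagonal.antidiagonal p, i.2 < p + 1 := fun i hi => by
          have := Finset.HasAntidiagonal.mem_antidiagonal.1 hi
          lia
        refine ⟨fun K => ∑ i ∈ Finset.HasAntidiagonal.antidiagonal p,
          PowerSeries.coeff i.1 (Λ K) * Φ i.2 K
          - PowerSeries.coeff (p + 1) (N K), ?_, ?_, ?_⟩
        · exact (DifferentiableOn.fun_sum fun i hi => (hΛ i.1).1.mul
            (hΦ i.2 (hlt i hi)).1).sub (hN _).1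
        · rw [map_sub, map_sub, PowerSeries.coeff_succ_X_mul, PowerSeries.coeff_succ_X_mul, map_add]
          simp only [PowerSeries.coeff_mul, ← Finset.sum_add_distrib]
          exact (HasCriticalExpansion.sum _ fun i hi => (hΛ i.1).2.mul
            (hΦ i.2 (hlt i hi)).2.2).sub (hN _).2
        · have hall : ∀ᶠ K in 𝓝 0, ∀ i ∈ Finset.HasAntidiagonal.antidiagonal p,
              Φ i.2 K = PowerSeries.coeff i.2 (Y K) :=
            (eventually_all_finset _).2 fun i hi =>
              (hΦ i.2 (hlt i hi)).2.1
          filter_upwards [hY, hall] with K hK hK'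
          rw [← PowerSeries.coeff_C_mul, hK, map_sub, PowerSeries.coeff_succ_X_mul,
            PowerSeries.coeff_mul]
          exact congrArg (· - _) (Finset.sum_congr rfl fun i hi => by rw [hK' i hi])
    obtain ⟨R, hRd, hRe, hR⟩ := key
    obtain ⟨Ψ, h1, h2, h3⟩ := exists_div_uhat hb hRd hRe (hYc p) hR
    exact ⟨Ψ, h1, h2, h3 _ _ rfl rfl⟩

theorem eventually_norm_lt {ρ : ℝ} (hρ : 0 < ρ) : ∀ᶠ H in 𝓝 (0 : ℂ), ‖H‖ < ρ := by
  filter_upwards [Metric.ball_mem_nhds (0 : ℂ) hρ] with H hH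
  simpa using hH

/-- Fixing one variable of a double series in `û` gives a series in `û` in the other variable. -/
theorem hasUhatSeries_fiber {ρ : ℝ} (hρ : 0 < ρ) {z : ℕ → ℕ → ℂ} {v : ℂ} {ZK : ℂ → ℂ}
    (h : ∀ H : ℂ, ‖H‖ < ρ →
      HasSum (fun pq : ℕ × ℕ => z pq.1 pq.2 * uhat H ^ pq.1 * v ^ pq.2) (ZK H)) :
    (∀ p, Summable fun q => z p q * v ^ q) ∧
      HasUhatSeries (PowerSeries.mk fun p => ∑' q, z p q * v ^ q) ZK := by
  have hsum : ∀ p, Summable fun q => z p q * v ^ q := by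
    obtain ⟨H, h0, hlt⟩ := (eventually_uhat_ne_zero.and
      ((eventually_norm_lt hρ).filter_mono nhdsWithin_le_nhds)).exists
    intro p
    have h1 := ((h H hlt).summable.prod_factor p).mul_left (uhat H ^ p)⁻¹
    refine h1.congr fun q => ?_
    have := pow_ne_zero p h0
    field_simp
  refine ⟨hsum, ?_⟩
  filter_upwards [eventually_norm_lt hρ] with H hH
  refine (h H hH).prod_fiberwise fun p => ?_
  rw [PowerSeries.coeff_mk, mul_comm]
  exact ((hsum p).hasSum.mul_left (uhat H ^ p)).congr_fun fun q => by ring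

/-- The power series identity encoded by the functional equation at a fixed `v = û(K)`. -/
theorem kernel_equation {Z₀ W : PowerSeries ℂ} {ν c t v z₀ z₁ : ℂ} {ZK : ℂ → ℂ}
    (hZ₀ : HasUhatSeries Z₀ Z0hat) (hW : HasUhatSeries W ZK)
    (h : ∀ᶠ H in 𝓝 0, (ν * v * uhat H - uhat H ^ 2 - c * t * v * (Z0hat H + uhat H * z₁))
        * (ZK H - z₀)
      = uhat H ^ 2 * (z₀ - Z0hat H) + c * uhat H * v * (uhat H ^ 2 - t * Z0hat H * z₁)) :
    (PowerSeries.C (ν * v) * PowerSeries.X - PowerSeries.X ^ 2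
        - PowerSeries.C (c * t * v) * (Z₀ + PowerSeries.X * PowerSeries.C z₁))
        * (W - PowerSeries.C z₀)
      = PowerSeries.X ^ 2 * (PowerSeries.C z₀ - Z₀) + PowerSeries.C c * PowerSeries.X
        * PowerSeries.C v * (PowerSeries.X ^ 2 - PowerSeries.C t * Z₀ * PowerSeries.C z₁) := by
  have hX := HasUhatSeries.X
  have h1 := ((((HasUhatSeries.const (ν * v)).mul hX).sub (hX.pow 2)).sub
    ((HasUhatSeries.const (c * t * v)).mul (hZ₀.add (hX.mul (.const z₁))))).mul (hW.sub (.const z₀))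
  have h2 := ((hX.pow 2).mul ((HasUhatSeries.const z₀).sub hZ₀)).add
    ((((HasUhatSeries.const c).mul hX).mul (.const v)).mul
      ((hX.pow 2).sub (((HasUhatSeries.const t).mul hZ₀).mul (.const z₁))))
  exact (h1.congr h).unique h2

/-- The identity between the leading and the singular parts of the kernel equation at `v = u_c`. -/
theorem critical_kernel_identity {H s p Z0 : ℂ} (hs : s ^ 2 = 7) (hp : p = H * cubicFactor H / 3)
    (hZ0 : Z0 = 1 / 10 * (1 - (1 - s) * H + 3 * H ^ 2 - H ^ 3) * cubicFactor H)
    (he : 3 - 3 * H + H ^ 2 ≠ 0) :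
    ((s + 3) * p - p ^ 2 - 10 / 3 * Z0) ^ 2
        * (3 / 20 * ((9 - 8 * H + 3 * H ^ 2) / (3 - 3 * H + H ^ 2) ^ 2) - 3 / 20)
      + -(p / 6) * (p ^ 2 * (3 * (2 + s) / 10 - Z0) + 9 / 10 * p ^ 3 - (s - 2) * p * Z0)
      = ((s + 3) * p - p ^ 2 - 10 / 3 * Z0) * (3 / 20 * p ^ 2 - p * Z0 / 6) := by
  have hk : (s + 3) * p - p ^ 2 - 10 / 3 * Z0
      = -(cubicFactor H / 9) * (1 - H) ^ 3 * (3 - 3 * H + H ^ 2) := by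
    rw [hp, hZ0]; unfold cubicFactor; ring
  rw [hk]
  have h1 : ∀ k e r : ℂ, e ≠ 0 → (k * e) ^ 2 * (3 / 20 * (r / e ^ 2) - 3 / 20)
      = k ^ 2 * (3 / 20) * (r - e ^ 2) := fun k e r he => by field_simp
  rw [h1 _ _ _ he, hp, hZ0]
  unfold cubicFactor
  linear_combination ((H * (10 - 12 * H + 6 * H ^ 2 - H ^ 3) / 3) ^ 2 *
    (10 - 12 * H + 6 * H ^ 2 - H ^ 3) * H / 60) * hs

/-- The kernel of the functional equation at `v = u_c`. -/
noncomputable def criticalKernel (Z₀ : PowerSeries ℂ) : PowerSeries ℂ :=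
  PowerSeries.C (nuc * uc : ℂ) * PowerSeries.X - PowerSeries.X ^ 2
    - PowerSeries.C (10 / 3 * uc * uc : ℂ)
      * (Z₀ + PowerSeries.X * PowerSeries.C (3 * ((Real.sqrt 7 : ℂ) - 2) / (10 * uc)))

/-- The right-hand side of the functional equation at `v = u_c`. -/
noncomputable def criticalRHS (Z₀ : PowerSeries ℂ) : PowerSeries ℂ :=
  PowerSeries.X ^ 2 * (PowerSeries.C (3 * (2 + (Real.sqrt 7 : ℂ)) / 10) - Z₀)
    + PowerSeries.C ((nuc : ℂ) ^ 2 - 1) * PowerSeries.X * PowerSeries.C (uc : ℂ)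
      * (PowerSeries.X ^ 2 - PowerSeries.C (tc : ℂ) * Z₀
        * PowerSeries.C (3 * ((Real.sqrt 7 : ℂ) - 2) / (10 * uc)))

/-- The singular part of the right-hand side of the functional equation at `v = u_c`. -/
noncomputable def criticalRHSSingular (Z₀ : PowerSeries ℂ) : PowerSeries ℂ :=
  PowerSeries.X ^ 2 * PowerSeries.C (3 / 20 : ℂ)
    - PowerSeries.C ((nuc : ℂ) ^ 2 - 1) * PowerSeries.X * PowerSeries.C (uc : ℂ)
      * (PowerSeries.C (tc : ℂ) * Z₀ * PowerSeries.C (1 / (20 * uc : ℂ)))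

theorem Ahat_eq (H : ℂ) : (((2 / 3 : ℝ) ^ ((4 : ℝ) / 3) : ℝ) : ℂ) * Ahat H
    = 3 / 20 * ((9 - 8 * H + 3 * H ^ 2) / (3 - 3 * H + H ^ 2) ^ 2) := by
  have h : (2 / 3 : ℝ) ^ ((4 : ℝ) / 3) * (3 / 2 : ℝ) ^ ((7 : ℝ) / 3) = 3 / 2 := by
    rw [show (2 / 3 : ℝ) = (3 / 2)⁻¹ by norm_num, Real.inv_rpow (by norm_num),
      ← Real.rpow_neg (by norm_num), ← Real.rpow_add (by norm_num)]
    norm_num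
  have h2 : (((2 / 3 : ℝ) ^ ((4 : ℝ) / 3) : ℝ) : ℂ) * (((3 / 2 : ℝ) ^ ((7 : ℝ) / 3) : ℝ) : ℂ)
      = 3 / 2 := by rw [← Complex.ofReal_mul, h]; push_cast; rfl
  rw [Ahat]
  linear_combination (1 / 10 * ((9 - 8 * H + 3 * H ^ 2) / (3 - 3 * H + H ^ 2) ^ 2)) * h2

theorem criticalKernel_identity {Z₀ A : PowerSeries ℂ} (hZ₀ : HasUhatSeries Z₀ Z0hat)
    (hA : HasUhatSeries A Ahat) :
    criticalKernel Z₀ ^ 2 * (PowerSeries.C (((2 / 3 : ℝ) ^ ((4 : ℝ) / 3) : ℝ) : ℂ) * A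
        - PowerSeries.C (3 / 20))
      + PowerSeries.X * -PowerSeries.C (uc / 6 : ℂ) * criticalRHS Z₀
      = criticalKernel Z₀ * criticalRHSSingular Z₀ := by
  have hX := HasUhatSeries.X
  have hκ : HasUhatSeries (criticalKernel Z₀) _ :=
    (((HasUhatSeries.const _).mul hX).sub (hX.pow 2)).sub
      ((HasUhatSeries.const _).mul (hZ₀.add (hX.mul (.const _))))
  have hN : HasUhatSeries (criticalRHS Z₀) _ :=
    ((hX.pow 2).mul ((HasUhatSeries.const _).sub hZ₀)).add
      ((((HasUhatSeries.const _).mul hX).mul (.const _)).mul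
        ((hX.pow 2).sub (((HasUhatSeries.const _).mul hZ₀).mul (.const _))))
  have hS : HasUhatSeries (criticalRHSSingular Z₀) _ :=
    ((hX.pow 2).mul (.const _)).sub
      ((((HasUhatSeries.const _).mul hX).mul (.const _)).mul
        (((HasUhatSeries.const _).mul hZ₀).mul (.const _)))
  rw [← map_neg PowerSeries.C]
  refine ((((hκ.pow 2).mul (((HasUhatSeries.const _).mul hA).sub (.const _))).add
    ((hX.mul (.const _)).mul hN)).congr ?_).unique (hκ.mul hS)
  have he : ∀ᶠ H in 𝓝 (0 : ℂ), 3 - 3 * H + H ^ 2 ≠ 0 :=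
    ContinuousAt.eventually_ne (by fun_prop) (by norm_num)
  filter_upwards [he] with H hH
  have key := critical_kernel_identity sqrt_seven_sq (p := H * cubicFactor H / 3) rfl
    (Z0 := Z0hat H) rfl hH
  have hu := uc_ne_zero
  have hct := nuc_sq_sub_one_mul_tc
  have hcu := nuc_sq_sub_one_mul_uc_sq
  set p := H * cubicFactor H / 3 with hp
  have hup : uhat H = uc * p := by rw [uhat_eq, hp]; ring
  have hz : 10 / 3 * uc * (3 * ((Real.sqrt 7 : ℂ) - 2) / (10 * uc)) = (Real.sqrt 7 : ℂ) - 2 := by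
    field_simp
  have hm : 10 / 3 * uc * (1 / (20 * uc)) = (1 / 6 : ℂ) := by field_simp; norm_num
  simp only [Ahat_eq, hup]
  generalize 3 * ((Real.sqrt 7 : ℂ) - 2) / (10 * uc) = z₁ at hz ⊢
  generalize (1 / (20 * uc) : ℂ) = m₁ at hm ⊢
  generalize 3 / 20 * ((9 - 8 * H + 3 * H ^ 2) / (3 - 3 * H + H ^ 2) ^ 2) = α at key ⊢
  have hν : (nuc : ℂ) = 1 + 2 * (Real.sqrt 7 : ℂ) := by rw [nuc]; push_cast; rfl
  have e1 : (nuc * uc : ℂ) * (uc * p) - (uc * p) ^ 2 - 10 / 3 * uc * uc * (Z0hat H + uc * p * z₁)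
      = uc ^ 2 * ((Real.sqrt 7 + 3) * p - p ^ 2 - 10 / 3 * Z0hat H) := by
    rw [hν]; linear_combination (-uc ^ 2 * p : ℂ) * hz
  have e2 : (uc * p) ^ 2 * (3 * (2 + (Real.sqrt 7 : ℂ)) / 10 - Z0hat H)
      + ((nuc : ℂ) ^ 2 - 1) * (uc * p) * uc * ((uc * p) ^ 2 - tc * Z0hat H * z₁)
      = uc ^ 2 * (p ^ 2 * (3 * (2 + (Real.sqrt 7 : ℂ)) / 10 - Z0hat H) + 9 / 10 * p ^ 3
        - (Real.sqrt 7 - 2) * p * Z0hat H) := by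
    linear_combination (uc ^ 2 * p ^ 3 : ℂ) * hcu - (p * uc ^ 2 * Z0hat H * z₁) * hct
      - (uc ^ 2 * p * Z0hat H) * hz
  have e3 : (uc * p) ^ 2 * (3 / 20)
      - ((nuc : ℂ) ^ 2 - 1) * (uc * p) * uc * (tc * Z0hat H * m₁)
      = uc ^ 2 * (3 / 20 * p ^ 2 - p * Z0hat H / 6) := by
    linear_combination (- (p * uc ^ 2 * Z0hat H * m₁)) * hct - (uc ^ 2 * p * Z0hat H) * hm
  rw [e1, e2, e3]
  linear_combination (uc ^ 4 : ℂ) * key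

/-- Each section of `Z` continues analytically in the uniformizing variable, with an expansion at
the critical point whose singular coefficient is read off from `A`. -/
theorem exists_section_expansion {Z₀ A : PowerSeries ℂ} (hZ₀ : HasUhatSeries Z₀ Z0hat)
    (hone : PowerSeries.constantCoeff Z₀ = 1) (hA : HasUhatSeries A Ahat)
    {W : ℂ → PowerSeries ℂ} (hWc : ∀ p, ContinuousAt (fun K => PowerSeries.coeff p (W K)) 0)
    (hW : ∀ᶠ K in 𝓝 0,
      (PowerSeries.C (nuc * uhat K) * PowerSeries.X - PowerSeries.X ^ 2
        - PowerSeries.C (((nuc : ℂ) ^ 2 - 1) * tc * uhat K)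
          * (Z₀ + PowerSeries.X * PowerSeries.C (Z1hat K))) * (W K - PowerSeries.C (Z0hat K))
      = PowerSeries.X ^ 2 * (PowerSeries.C (Z0hat K) - Z₀)
        + PowerSeries.C ((nuc : ℂ) ^ 2 - 1) * PowerSeries.X * PowerSeries.C (uhat K)
          * (PowerSeries.X ^ 2 - PowerSeries.C (tc : ℂ) * Z₀ * PowerSeries.C (Z1hat K)))
    (p : ℕ) :
    ∃ (Φ : ℂ → ℂ) (φ : ℂ), DifferentiableOn ℂ Φ uhatDomain ∧
      Φ =ᶠ[𝓝 0] (fun K => PowerSeries.coeff p (W K)) ∧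
      HasCriticalExpansion Φ φ
        ((((2 / 3 : ℝ) ^ ((4 : ℝ) / 3) : ℝ) : ℂ) * PowerSeries.coeff p A) := by
  obtain ⟨S, hS⟩ : ∃ S : PowerSeries ℂ, Z₀ = PowerSeries.X * S + 1 :=
    ⟨_, by simpa [hone] using PowerSeries.eq_X_mul_shift_add_const Z₀⟩
  have hu := uc_ne_zero
  have hb : (10 / 3 * uc : ℂ) ≠ 0 := mul_ne_zero (by norm_num) hu
  have hud := differentiable_uhat.differentiableOn (s := uhatDomain)
  have hz0 := HasCoeffExpansion.C differentiable_Z0hat.differentiableOn HasCriticalExpansion.Z0hat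
  set Λ₀ : PowerSeries ℂ := PowerSeries.C (nuc * uc : ℂ) - PowerSeries.X
    - PowerSeries.C (10 / 3 * uc * uc : ℂ) * S
    - PowerSeries.C (10 / 3 * uc * uc * (3 * ((Real.sqrt 7 : ℂ) - 2) / (10 * uc))) with hΛ₀
  have hΛ : HasCoeffExpansion (fun K => PowerSeries.C (nuc * uhat K) - PowerSeries.X
      - PowerSeries.C (10 / 3 * uc * uhat K) * S
      - PowerSeries.C (10 / 3 * uc * uhat K * Z1hat K)) Λ₀ (-PowerSeries.C (uc / 6 : ℂ)) := by
    have h1 := (((HasCoeffExpansion.C (hud.const_mul (nuc : ℂ))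
      (HasCriticalExpansion.uhat.const_mul (nuc : ℂ))).sub (.const PowerSeries.X)).sub
      ((HasCoeffExpansion.C (hud.const_mul _)
        (HasCriticalExpansion.uhat.const_mul (10 / 3 * uc : ℂ))).mul (.const S))).sub
      (HasCoeffExpansion.C ((hud.const_mul _).mul differentiableOn_Z1hat)
        ((HasCriticalExpansion.uhat.const_mul (10 / 3 * uc : ℂ)).mul HasCriticalExpansion.Z1hat))
    convert h1 using 1
    · rfl
    have h2 : 10 / 3 * uc * uc * (1 / (20 * uc)) = (uc / 6 : ℂ) := by field_simp; norm_num
    simp only [h2, mul_zero, map_zero, zero_mul, add_zero, zero_sub, sub_zero]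
  have hN : HasCoeffExpansion (fun K => PowerSeries.X ^ 2 * (PowerSeries.C (Z0hat K) - Z₀)
        + PowerSeries.C ((nuc : ℂ) ^ 2 - 1) * PowerSeries.X * PowerSeries.C (uhat K)
          * (PowerSeries.X ^ 2 - PowerSeries.C (tc : ℂ) * Z₀ * PowerSeries.C (Z1hat K)))
      (criticalRHS Z₀) (criticalRHSSingular Z₀) := by
    have h1 := ((HasCoeffExpansion.const (PowerSeries.X ^ 2)).mul (hz0.sub (.const Z₀))).add
      (((HasCoeffExpansion.const (PowerSeries.C ((nuc : ℂ) ^ 2 - 1) * PowerSeries.X)).mul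
        (HasCoeffExpansion.C hud HasCriticalExpansion.uhat)).mul
        ((HasCoeffExpansion.const (PowerSeries.X ^ 2)).sub
          ((HasCoeffExpansion.const (PowerSeries.C (tc : ℂ) * Z₀)).mul
            (HasCoeffExpansion.C differentiableOn_Z1hat HasCriticalExpansion.Z1hat))))
    convert h1 using 1
    · rfl
    · simp only [criticalRHSSingular, map_zero]
      ring
  have hκ : criticalKernel Z₀ = PowerSeries.X * Λ₀ - PowerSeries.C (10 / 3 * uc * uc : ℂ) := by
    rw [criticalKernel, hΛ₀, hS]
    simp only [map_mul]
    ring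
  have hκ0 : PowerSeries.constantCoeff (criticalKernel Z₀) ≠ 0 := by
    rw [hκ]; simpa using hu
  set Y₀ : PowerSeries ℂ := (criticalKernel Z₀)⁻¹ * criticalRHS Z₀
  have hY₀ : criticalKernel Z₀ * Y₀ = criticalRHS Z₀ := by
    rw [← mul_assoc, PowerSeries.mul_inv_cancel _ hκ0, one_mul]
  set Y₄ : PowerSeries ℂ := PowerSeries.C (((2 / 3 : ℝ) ^ ((4 : ℝ) / 3) : ℝ) : ℂ) * A
    - PowerSeries.C (3 / 20) with hY₄def
  have hY₄ : criticalKernel Z₀ * Y₄ + PowerSeries.X * (-PowerSeries.C (uc / 6 : ℂ) * Y₀)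
      = criticalRHSSingular Z₀ := by
    refine mul_left_cancel₀ (a := criticalKernel Z₀) (fun h => hκ0 (by simp [h])) ?_
    rw [← criticalKernel_identity hZ₀ hA, ← hY₀]
    ring
  obtain ⟨Φ, h1, h2, h3⟩ := exists_coeff_expansion hb hΛ hN
    (Y := fun K => W K - PowerSeries.C (Z0hat K)) (Y₀ := Y₀) (Y₄ := Y₄)
    (fun p => by
      simp only [map_sub]
      exact (hWc p).sub ((hz0 p).1.differentiableAt uhatDomain_mem_nhds_zero).continuousAt)
    (by
      filter_upwards [hW] with K hK
      rw [← hK, nuc_sq_sub_one_mul_tc, hS]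
      simp only [map_mul]
      ring)
    (by rw [← hY₀, hκ]; ring) (by rw [← hY₄, hκ]; ring) p
  have h4 := h3.add (hz0 p).2
  rw [← map_add (PowerSeries.coeff p) Y₄, hY₄def, sub_add_cancel, PowerSeries.coeff_C_mul] at h4
  refine ⟨_, _, h1.add (hz0 p).1, ?_, h4⟩
  filter_upwards [h2] with K hK
  rw [Pi.add_apply, hK, map_sub, sub_add_cancel]

/-- for each fixed `p`, `z_{p,q} ~ (a_p/Γ(−4/3)) · u_c^{−q} · q^{−7/3}` as `q → ∞`. -/
theorem statement1
    (ρ : ℝ) (hρ : 0 < ρ)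
    (z : ℕ → ℕ → ℝ) (hz_nonneg : ∀ p q, 0 ≤ z p q)
    -- `z p 0` are the Taylor coefficients of `Z₀ = Ẑ₀ ∘ û⁻¹` at `0`
    (hz0 : ∀ H : ℂ, ‖H‖ < ρ →
      HasSum (fun p : ℕ => (z p 0 : ℂ) * uhat H ^ p) (Z0hat H))
    -- `z p q` are the Taylor coefficients at `(0,0)` of the solution `Z(u,v)` of the
    -- algebraic equation, expressed through the parametrization `u = û(H)`, `v = û(K)`
    (hZ : ∀ H K : ℂ, ‖H‖ < ρ → ‖K‖ < ρ → ∃ ZHK : ℂ,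
      HasSum (fun pq : ℕ × ℕ => (z pq.1 pq.2 : ℂ) * uhat H ^ pq.1 * uhat K ^ pq.2) ZHK ∧
      ((nuc : ℂ) * uhat K * uhat H - uhat H ^ 2
          - ((nuc : ℂ) ^ 2 - 1) * (tc : ℂ) * uhat K * (Z0hat H + uhat H * Z1hat K))
          * (ZHK - Z0hat K)
        = uhat H ^ 2 * (Z0hat K - Z0hat H)
          + ((nuc : ℂ) ^ 2 - 1) * uhat H * uhat K * (uhat H ^ 2 - (tc : ℂ) * Z0hat H * Z1hat K))
    (a : ℕ → ℝ) (ha_pos : ∀ p, 0 < a p)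
    -- `a p` are the Taylor coefficients of `A = Â ∘ û⁻¹` at `0`
    (hA : ∀ H : ℂ, ‖H‖ < ρ →
      HasSum (fun p : ℕ => (a p : ℂ) * uhat H ^ p) (Ahat H))
    :
    ∀ p : ℕ, Asymptotics.IsEquivalent Filter.atTop
      (fun q : ℕ => z p q)
      (fun q : ℕ => (a p / Real.Gamma (-4/3)) * (uc ^ q)⁻¹ * (q : ℝ) ^ (-(7:ℝ)/3)) := by
  intro p
  have hZ₀ : HasUhatSeries (PowerSeries.mk fun p => (z p 0 : ℂ)) Z0hat := by
    filter_upwards [eventually_norm_lt hρ] with H hH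
    simpa using hz0 H hH
  have hAs : HasUhatSeries (PowerSeries.mk fun p => (a p : ℂ)) Ahat := by
    filter_upwards [eventually_norm_lt hρ] with H hH
    simpa using hA H hH
  have hone : PowerSeries.constantCoeff (PowerSeries.mk fun p => (z p 0 : ℂ)) = 1 := by
    have h1 := hz0 0 (by simpa using hρ)
    have h2 : HasSum (fun p : ℕ => (z p 0 : ℂ) * uhat 0 ^ p) (z 0 0 : ℂ) := by
      simpa [uhat_zero] using hasSum_single (f := fun p : ℕ => (z p 0 : ℂ) * uhat 0 ^ p) 0
        fun n hn => by simp [uhat_zero, hn]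
    have h3 := h2.unique h1
    simpa [Z0hat] using h3
  set W : ℂ → PowerSeries ℂ := fun K => PowerSeries.mk fun p => ∑' q, (z p q : ℂ) * uhat K ^ q
  have hsec : ∀ K : ℂ, ‖K‖ < ρ → (∀ p, Summable fun q => (z p q : ℂ) * uhat K ^ q) ∧
      (PowerSeries.C (nuc * uhat K) * PowerSeries.X - PowerSeries.X ^ 2
        - PowerSeries.C (((nuc : ℂ) ^ 2 - 1) * tc * uhat K)
          * (PowerSeries.mk (fun p => (z p 0 : ℂ)) + PowerSeries.X * PowerSeries.C (Z1hat K)))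
          * (W K - PowerSeries.C (Z0hat K))
      = PowerSeries.X ^ 2 * (PowerSeries.C (Z0hat K) - PowerSeries.mk (fun p => (z p 0 : ℂ)))
        + PowerSeries.C ((nuc : ℂ) ^ 2 - 1) * PowerSeries.X * PowerSeries.C (uhat K)
          * (PowerSeries.X ^ 2 - PowerSeries.C (tc : ℂ) * PowerSeries.mk (fun p => (z p 0 : ℂ))
            * PowerSeries.C (Z1hat K)) := by
    intro K hK
    have hex := fun H hH => hZ H K hH hK
    choose! ZK hsum heq using hex
    obtain ⟨h1, h2⟩ := hasUhatSeries_fiber hρ (z := fun p q => (z p q : ℂ)) hsum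
    exact ⟨h1, kernel_equation hZ₀ h2 ((eventually_norm_lt hρ).mono heq)⟩
  have hser : ∀ p, HasUhatSeries (PowerSeries.mk fun q => (z p q : ℂ))
      (fun K => PowerSeries.coeff p (W K)) := fun p => by
    filter_upwards [eventually_norm_lt hρ] with K hK
    simpa [W] using ((hsec K hK).1 p).hasSum
  obtain ⟨Φ, φ, hΦd, hΦe, hΦ⟩ := exists_section_expansion hZ₀ hone hAs
    (fun p => (hser p).continuousAt)
    ((eventually_norm_lt hρ).mono fun K hK => (hsec K hK).2) p
  have hlim := ((hser p).congr hΦe.symm).tendsto_coeff hΦd hΦ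
  have hθ : (2 / 3 : ℂ) ^ ((4 : ℂ) / 3) = (((2 / 3 : ℝ) ^ ((4 : ℝ) / 3) : ℝ) : ℂ) := by
    rw [Complex.ofReal_cpow (by norm_num)]
    push_cast
    rfl
  have hθ0 : (2 / 3 : ℝ) ^ ((4 : ℝ) / 3) ≠ 0 := (Real.rpow_pos_of_pos (by norm_num) _).ne'
  simp only [hθ, PowerSeries.coeff_mk] at hlim
  have hreal : Tendsto (fun q : ℕ => z p q * uc ^ q * (q : ℝ) ^ ((7 : ℝ) / 3)) atTop
      (𝓝 (a p / Real.Gamma (-4 / 3))) := by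
    rw [← tendsto_ofReal_iff]
    convert hlim using 2
    · push_cast; rfl
    · generalize (2 / 3 : ℝ) ^ ((4 : ℝ) / 3) = θ at hθ0
      have : (θ : ℂ) ≠ 0 := by exact_mod_cast hθ0
      push_cast
      field_simp
  have hΓ : Real.Gamma (-4 / 3) ≠ 0 := by
    refine Real.Gamma_ne_zero fun m hm => ?_
    have h1 : (3 * m : ℝ) = 4 := by linarith
    have h2 : 3 * m = 4 := by exact_mod_cast h1
    lia
  have hL : a p / Real.Gamma (-4 / 3) ≠ 0 := div_ne_zero (ha_pos p).ne' hΓ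
  have h1 := ((isEquivalent_const_iff_tendsto hL).2 hreal).mul
    (IsEquivalent.refl (u := fun q : ℕ => (uc ^ q)⁻¹ * (q : ℝ) ^ (-(7 : ℝ) / 3)) (l := atTop))
  refine (h1.congr_left ?_).congr_right (Eventually.of_forall fun q => ?_)
  · filter_upwards [eventually_gt_atTop 0] with q hq
    have hq0 : (0 : ℝ) < q := by exact_mod_cast hq
    have h2 : (q : ℝ) ^ ((7 : ℝ) / 3) * (q : ℝ) ^ (-(7 : ℝ) / 3) = 1 := by
      rw [← Real.rpow_add hq0]; norm_num
    have h3 : uc ^ q * (uc ^ q)⁻¹ = 1 := mul_inv_cancel₀ (pow_ne_zero q uc_pos.ne')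
    simp only [Pi.mul_apply]
    linear_combination (z p q * uc ^ q * (uc ^ q)⁻¹) * h2 + z p q * h3
  · simp only [Pi.mul_apply, Function.const_apply]
    ring
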